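/- arXiv:2503.08991 — 3 statements merged into one kernel-verified Lean document; each statement's English description precedes it below -/
import Mathlib

section
/- Let ν be any weak* limit point of the sequence (ν_r)_{r∈ℕ} of probability measures on 𝕋², where ν_r = (1/#P_r^*(f_A)) Σ_{p ∈ P_r^*(f_A)} δ_p. Then for every ε > 0 such that 3ε is an expansive constant of f_A, there exist constants A_ε, B_ε > 0 such that for every x ∈ 𝕋² and every n ≥ 1, A_ε·λ^{−n} ≤ ν(B_n(x,ε)) ≤ B_ε·λ^{−n}; in particular, ν(B_n(y,ε)) ≤ (B_ε/A_ε)·ν(B_n(x,ε)) for all x,y ∈ 𝕋² and n ≥ 1, so ν is a homogeneous measure for f_A. -/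
open Matrix

/-- The 2-torus ℝ²/ℤ². -/
abbrev Torus : Type := AddCircle (1:ℝ) × AddCircle (1:ℝ)

/-- The quotient map ℝ² → 𝕋². -/
noncomputable def torusMk (v : ℝ × ℝ) : Torus := (↑v.1, ↑v.2)

/-- The linear action of an integer matrix `A ∈ SL(2,ℤ)` on ℝ². -/
noncomputable def matAct (A : Matrix.SpecialLinearGroup (Fin 2) ℤ) (v : ℝ × ℝ) : ℝ × ℝ :=
  ((A.1 0 0 : ℤ) * v.1 + (A.1 0 1 : ℤ) * v.2,
   (A.1 1 0 : ℤ) * v.1 + (A.1 1 1 : ℤ) * v.2)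

open MeasureTheory Filter

/-- The `t`-th iterate of `f`, for `t : ℤ`. -/
noncomputable def zIter {X : Type*} [TopologicalSpace X] (f : X ≃ₜ X) (t : ℤ) : X → X :=
  ⇑(f.toEquiv ^ t)

/-- The Bowen ball of center `y`, radius `ρ` and length `n` for `g`. -/
def BowenBall {Y : Type*} [MetricSpace Y] (g : Y → Y) (y : Y) (ρ : ℝ) (n : ℕ) : Set Y :=
  {z | ∀ k < n, dist (g^[k] z) (g^[k] y) ≤ ρ}

/-- `P_r^*(f_A)`: the periodic and antipodal periodic points of period `r`,
with the four self-antipodal points removed. -/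
def Pstar (fA : Torus ≃ₜ Torus) (r : ℕ) : Set Torus :=
  ({x : Torus | fA^[r] x = x} ∪ {x : Torus | fA^[r] x = -x}) \ {x : Torus | -x = x}

/-- The measure `ν_r`: the uniform average of the Dirac measures on `P_r^*(f_A)`. -/
noncomputable def nuMeas (fA : Torus ≃ₜ Torus) (r : ℕ) : Measure Torus :=
  (Nat.card (Pstar fA r) : ENNReal)⁻¹ •
    Measure.sum (fun p : (Pstar fA r) => Measure.dirac (p : Torus))


namespace HomAux

open Topology

lemma torusMk_surj (x : Torus) : ∃ v : ℝ × ℝ, torusMk v = x := by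
  obtain ⟨a, b⟩ := x
  obtain ⟨a, rfl⟩ := QuotientAddGroup.mk_surjective a
  obtain ⟨b, rfl⟩ := QuotientAddGroup.mk_surjective b
  exact ⟨(a, b), rfl⟩

/-- toral endomorphism of an integer matrix. -/
noncomputable def tor (N : Matrix (Fin 2) (Fin 2) ℤ) : Torus →+ Torus where
  toFun x := (N 0 0 • x.1 + N 0 1 • x.2, N 1 0 • x.1 + N 1 1 • x.2)
  map_zero' := by simp
  map_add' x y := by
    ext <;> simp only [Prod.fst_add, Prod.snd_add, smul_add] <;> abel

lemma tor_apply (N : Matrix (Fin 2) (Fin 2) ℤ) (x : Torus) :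
    tor N x = (N 0 0 • x.1 + N 0 1 • x.2, N 1 0 • x.1 + N 1 1 • x.2) := rfl

lemma tor_mk (N : Matrix (Fin 2) (Fin 2) ℤ) (v : ℝ × ℝ) :
    tor N (torusMk v) = torusMk ((N 0 0 : ℝ) * v.1 + (N 0 1 : ℝ) * v.2,
      (N 1 0 : ℝ) * v.1 + (N 1 1 : ℝ) * v.2) := by
  simp only [tor_apply, torusMk, AddCircle.coe_add, ← zsmul_eq_mul, AddCircle.coe_zsmul]

lemma tor_mul (M N : Matrix (Fin 2) (Fin 2) ℤ) (x : Torus) :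
    tor (M * N) x = tor M (tor N x) := by
  ext <;> simp only [tor_apply, Matrix.mul_apply, Fin.sum_univ_two, smul_add, add_smul, mul_smul]
    <;> abel

lemma tor_sub_int (M : Matrix (Fin 2) (Fin 2) ℤ) (s : ℤ) (x : Torus) :
    tor (M - s • (1 : Matrix (Fin 2) (Fin 2) ℤ)) x = tor M x - s • x := by
  ext <;> simp [-zsmul_eq_mul, -zsmul_one, tor_apply, sub_smul] <;> abel

lemma tor_one (x : Torus) : tor 1 x = x := by
  ext <;> simp [tor_apply]

noncomputable def pr (k : Fin 2 → ℤ) : Torus →+ AddCircle (1:ℝ) where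
  toFun x := k 0 • x.1 + k 1 • x.2
  map_zero' := by simp
  map_add' x y := by
    simp only [Prod.fst_add, Prod.snd_add, smul_add]; abel

lemma pr_apply (k : Fin 2 → ℤ) (x : Torus) : pr k x = k 0 • x.1 + k 1 • x.2 := rfl

lemma coe_int_eq_zero (n : ℤ) : ((n : ℝ) : AddCircle (1:ℝ)) = 0 := by
  rw [AddCircle.coe_eq_zero_iff]; exact ⟨n, by simp⟩

lemma coe_eq_zero_int {x : ℝ} (h : (x : AddCircle (1:ℝ)) = 0) : ∃ n : ℤ, (n : ℝ) = x := by
  rw [AddCircle.coe_eq_zero_iff] at h; simpa using h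

lemma tor_trivial_char (N : Matrix (Fin 2) (Fin 2) ℤ) (hN : N.det ≠ 0) (k : Fin 2 → ℤ)
    (h : ∀ x, tor N x = 0 → pr k x = 0) :
    ∃ m : Fin 2 → ℤ, k 0 = m 0 * N 0 0 + m 1 * N 1 0 ∧ k 1 = m 0 * N 0 1 + m 1 * N 1 1 := by
  have hD : (N.det : ℝ) ≠ 0 := by exact_mod_cast hN
  have hdet : (N.det : ℝ) = N 0 0 * N 1 1 - N 0 1 * N 1 0 := by
    rw [Matrix.det_fin_two]; push_cast; ring
  set D : ℝ := (N.det : ℝ) with hDdef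
  have key : ∀ a b : ℤ, ∃ m : ℤ, (m : ℝ) =
      k 0 * ((N 1 1 * a - N 0 1 * b) / D) + k 1 * ((- N 1 0 * a + N 0 0 * b) / D) := by
    intro a b
    have := h (torusMk ((N 1 1 * a - N 0 1 * b) / D, (- N 1 0 * a + N 0 0 * b) / D)) (by
      rw [tor_mk]
      have e1 : (N 0 0 : ℝ) * ((N 1 1 * a - N 0 1 * b) / D) + N 0 1 * ((- N 1 0 * a + N 0 0 * b) / D) = (a : ℝ) := by
        field_simp; rw [hdet]; ring
      have e2 : (N 1 0 : ℝ) * ((N 1 1 * a - N 0 1 * b) / D) + N 1 1 * ((- N 1 0 * a + N 0 0 * b) / D) = (b : ℝ) := by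
        field_simp; rw [hdet]; ring
      simp only [e1, e2, torusMk]
      rw [coe_int_eq_zero, coe_int_eq_zero]; rfl)
    apply coe_eq_zero_int
    rw [← this]
    simp only [pr_apply, torusMk, AddCircle.coe_add, ← zsmul_eq_mul, AddCircle.coe_zsmul]
  obtain ⟨m0, h0⟩ := key 1 0
  obtain ⟨m1, h1⟩ := key 0 1
  refine ⟨![m0, m1], ?_, ?_⟩
  · simp only [Matrix.cons_val_zero, Matrix.cons_val_one]
    have : (k 0 : ℝ) = m0 * N 0 0 + m1 * N 1 0 := by
      rw [h0, h1]; push_cast; field_simp; rw [hdet]; ring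
    exact_mod_cast this
  · simp only [Matrix.cons_val_zero, Matrix.cons_val_one]
    have : (k 1 : ℝ) = m0 * N 0 1 + m1 * N 1 1 := by
      rw [h0, h1]; push_cast; field_simp; rw [hdet]; ring
    exact_mod_cast this

lemma tor_ker_finite (N : Matrix (Fin 2) (Fin 2) ℤ) (hN : N.det ≠ 0) :
    {x : Torus | tor N x = 0}.Finite := by
  have hpos : 0 < N.det.natAbs := Int.natAbs_pos.mpr hN
  have hf := AddCircle.finite_torsion (1:ℝ) hpos
  refine (hf.prod hf).subset ?_
  rintro x hx
  have h2 : tor (N.adjugate * N) x = 0 := by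
    rw [tor_mul]; rw [Set.mem_ofPred_eq] at hx; rw [hx, map_zero]
  rw [Matrix.adjugate_mul] at h2
  have h3 : N.det • x = 0 := by
    rw [← h2]; ext <;> simp [-zsmul_eq_mul, -zsmul_one, tor_apply]
  have h4 : N.det.natAbs • x = 0 := by
    rw [← natCast_zsmul]
    rcases Int.natAbs_eq N.det with h | h
    · rw [← h]; exact h3
    · rw [h, neg_smul, neg_eq_zero] at h3; exact h3
  exact ⟨congrArg Prod.fst h4, congrArg Prod.snd h4⟩

/-- the norm form -/
def Q (A : Matrix (Fin 2) (Fin 2) ℤ) (k : Fin 2 → ℤ) : ℤ :=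
  A 0 1 * k 0 ^ 2 + (A 1 1 - A 0 0) * k 0 * k 1 - A 1 0 * k 1 ^ 2

lemma Q_ne_zero (A : Matrix (Fin 2) (Fin 2) ℤ) (hdet : A 0 0 * A 1 1 - A 0 1 * A 1 0 = 1)
    (ht : 3 ≤ A 0 0 + A 1 1) (k : Fin 2 → ℤ) (hk : k ≠ 0) : Q A k ≠ 0 := by
  intro h
  unfold Q at h
  generalize A 0 0 = a at *
  generalize A 0 1 = b at *
  generalize A 1 0 = c at *
  generalize A 1 1 = d at *
  have sq : ∀ j : ℤ, (a + d) ^ 2 - 4 ≠ j ^ 2 := by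
    intro j hj
    have h1 : |j| < a + d := by
      apply abs_lt_of_sq_lt_sq _ (by omega)
      linarith
    have h2 : a + d - 1 < |j| := by
      apply lt_of_pow_lt_pow_left₀ 2 (abs_nonneg _)
      rw [sq_abs]; nlinarith
    omega
  have hb : b ≠ 0 := by
    rintro rfl
    exact sq (a - d) (by linear_combination 4 * hdet)
  have h1 : (2 * b * k 0 + (d - a) * k 1) ^ 2 = ((a + d) ^ 2 - 4) * k 1 ^ 2 := by
    linear_combination 4 * b * h - 4 * k 1 ^ 2 * hdet
  have hk1 : k 1 ≠ 0 := by
    intro h0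
    rw [h0] at h
    have : k 0 = 0 := by
      have : b * k 0 ^ 2 = 0 := by linarith
      simpa [hb] using this
    apply hk; funext i; fin_cases i <;> simp [*]
  have h2 : k 1 ^ 2 ∣ (2 * b * k 0 + (d - a) * k 1) ^ 2 := Dvd.intro_left _ h1.symm
  rw [Int.pow_dvd_pow_iff (by norm_num)] at h2
  obtain ⟨j, hj⟩ := h2
  apply sq j
  rw [hj] at h1
  have : k 1 ^ 2 ≠ 0 := pow_ne_zero _ hk1
  apply mul_left_cancel₀ this
  linarith

lemma pow_form (A : Matrix (Fin 2) (Fin 2) ℤ) (hdet : A 0 0 * A 1 1 - A 0 1 * A 1 0 = 1)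
    (lam : ℝ) (hlam : 1 < lam) (htr : (A 0 0 : ℝ) + A 1 1 = lam + lam⁻¹) (r : ℕ) :
    ∃ p q : ℤ, A ^ r = p • A + q • (1 : Matrix (Fin 2) (Fin 2) ℤ) ∧ p * lam + q = lam ^ r ∧
      p * lam⁻¹ + q = (lam⁻¹) ^ r := by
  induction r with
  | zero => exact ⟨0, 1, by simp, by simp, by simp⟩
  | succ r ih =>
    obtain ⟨p, q, h1, h2, h3⟩ := ih
    have hl : lam * lam⁻¹ = 1 := mul_inv_cancel₀ (by linarith)
    refine ⟨p * (A 0 0 + A 1 1) + q, -p, ?_, ?_, ?_⟩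
    · rw [pow_succ, h1]
      ext i j
      fin_cases i <;> fin_cases j <;> simp [-zsmul_eq_mul, -zsmul_one, Matrix.mul_apply, Fin.sum_univ_two]
      · linear_combination p * (-hdet)
      · ring
      · ring
      · linear_combination p * (-hdet)
    · push_cast
      rw [pow_succ, ← h2, htr]
      linear_combination p * hl
    · push_cast
      rw [pow_succ, ← h3, htr]
      linear_combination p * hl

lemma det_form (A : Matrix (Fin 2) (Fin 2) ℤ) (hdet : A 0 0 * A 1 1 - A 0 1 * A 1 0 = 1)
    (lam : ℝ) (hlam : 1 < lam) (htr : (A 0 0 : ℝ) + A 1 1 = lam + lam⁻¹) (r : ℕ) (s : ℤ) :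
    ((A ^ r - s • (1 : Matrix (Fin 2) (Fin 2) ℤ)).det : ℝ) =
      (lam ^ r - s) * ((lam⁻¹) ^ r - s) := by
  obtain ⟨p, q, h1, h2, h3⟩ := pow_form A hdet lam hlam htr r
  have hl : lam * lam⁻¹ = 1 := mul_inv_cancel₀ (by linarith)
  have hdet' : (A 0 0 : ℝ) * A 1 1 - A 0 1 * A 1 0 = 1 := by exact_mod_cast hdet
  rw [← h2, ← h3, h1, Matrix.det_fin_two]
  simp [-zsmul_eq_mul, -zsmul_one]
  linear_combination (p:ℝ) ^ 2 * hdet' + p * (q - s) * htr - p ^ 2 * hl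

lemma Q_mul (A : Matrix (Fin 2) (Fin 2) ℤ) (p q : ℤ) (k m : Fin 2 → ℤ)
    (N : Matrix (Fin 2) (Fin 2) ℤ) (hN : N = p • A + q • (1 : Matrix (Fin 2) (Fin 2) ℤ))
    (h0 : k 0 = m 0 * N 0 0 + m 1 * N 1 0) (h1 : k 1 = m 0 * N 0 1 + m 1 * N 1 1) :
    Q A k = N.det * Q A m := by
  unfold Q
  rw [h0, h1, Matrix.det_fin_two, hN]
  simp [-zsmul_eq_mul, -zsmul_one]
  ring

lemma det_big (A : Matrix (Fin 2) (Fin 2) ℤ) (hdet : A 0 0 * A 1 1 - A 0 1 * A 1 0 = 1)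
    (lam : ℝ) (hlam : 1 < lam) (htr : (A 0 0 : ℝ) + A 1 1 = lam + lam⁻¹) (r : ℕ) (s : ℤ)
    (hs : s = 1 ∨ s = -1) :
    lam ^ r - 2 ≤ |((A ^ r - s • (1 : Matrix (Fin 2) (Fin 2) ℤ)).det : ℝ)| := by
  rw [det_form A hdet lam hlam htr]
  have h1 : lam ^ r * (lam⁻¹) ^ r = 1 := by
    rw [← mul_pow, mul_inv_cancel₀ (by linarith), one_pow]
  have h2 : 0 < (lam⁻¹) ^ r := by positivity
  have h3 : 0 < lam ^ r := by positivity
  rcases hs with rfl | rfl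
  · refine le_trans ?_ (neg_le_abs _)
    push_cast; nlinarith
  · refine le_trans ?_ (le_abs_self _)
    push_cast; nlinarith

/-- For `k ≠ 0` the character is eventually nontrivial on the kernels. -/
lemma char_nontriv (A : Matrix (Fin 2) (Fin 2) ℤ) (hdet : A 0 0 * A 1 1 - A 0 1 * A 1 0 = 1)
    (lam : ℝ) (hlam : 1 < lam) (htr : (A 0 0 : ℝ) + A 1 1 = lam + lam⁻¹)
    (k : Fin 2 → ℤ) (hk : k ≠ 0) :
    ∀ᶠ r in atTop, ∀ s : ℤ, (s = 1 ∨ s = -1) →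
      (A ^ r - s • (1 : Matrix (Fin 2) (Fin 2) ℤ)).det ≠ 0 ∧
      ∃ x, tor (A ^ r - s • (1 : Matrix (Fin 2) (Fin 2) ℤ)) x = 0 ∧ pr k x ≠ 0 := by
  have ht : 3 ≤ A 0 0 + A 1 1 := by
    have : (2 : ℝ) < A 0 0 + A 1 1 := by
      rw [htr]
      have hl : lam * lam⁻¹ = 1 := mul_inv_cancel₀ (by linarith)
      have h0 : 0 < lam⁻¹ := by positivity
      nlinarith [mul_pos h0 (mul_pos (sub_pos.2 hlam) (sub_pos.2 hlam))]
    have : (2 : ℤ) < A 0 0 + A 1 1 := by exact_mod_cast this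
    omega
  have hlim := tendsto_pow_atTop_atTop_of_one_lt hlam
  filter_upwards [hlim.eventually_gt_atTop (|(Q A k : ℝ)| + 2)] with r hr s hs
  have hb := det_big A hdet lam hlam htr r s hs
  set N := A ^ r - s • (1 : Matrix (Fin 2) (Fin 2) ℤ) with hN
  have hQ : |(Q A k : ℝ)| < |(N.det : ℝ)| := by linarith
  have hN0 : N.det ≠ 0 := by
    intro h; rw [h] at hQ; simp at hQ
    exact absurd hQ (not_lt.2 (abs_nonneg _))
  refine ⟨hN0, ?_⟩
  by_contra! hcon
  obtain ⟨m, h0, h1⟩ := tor_trivial_char N hN0 k hcon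
  obtain ⟨p, q, hp, -, -⟩ := pow_form A hdet lam hlam htr r
  have hmul := Q_mul A p (q - s) k m N (by rw [hN, hp, sub_smul]; abel) h0 h1
  have hk0 := Q_ne_zero A hdet ht k hk
  have hm0 : Q A m ≠ 0 := by
    intro h; rw [h] at hmul; simp at hmul; exact hk0 hmul
  have hle : |N.det| ≤ |Q A k| := by
    rw [hmul, abs_mul]
    exact le_mul_of_one_le_right (abs_nonneg _) (Int.one_le_abs hm0)
  have : |(N.det : ℝ)| ≤ |(Q A k : ℝ)| := by exact_mod_cast hle
  linarith

noncomputable def ch (k : Fin 2 → ℤ) : C(Torus, ℂ) where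
  toFun x := (AddCircle.toCircle (pr k x) : ℂ)
  continuous_toFun := by
    have : Continuous fun x : Torus => pr k x := by
      simp only [pr_apply]; fun_prop
    exact continuous_subtype_val.comp (AddCircle.continuous_toCircle.comp this)

lemma ch_apply (k : Fin 2 → ℤ) (x : Torus) : ch k x = (AddCircle.toCircle (pr k x) : ℂ) := rfl

lemma ch_add (k : Fin 2 → ℤ) (x y : Torus) : ch k (x + y) = ch k x * ch k y := by
  simp [ch_apply, AddCircle.toCircle_add]

lemma ch_norm (k : Fin 2 → ℤ) (x : Torus) : ‖ch k x‖ = 1 := by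
  exact Circle.norm_coe _

lemma ch_zero (x : Torus) : ch 0 x = 1 := by
  simp [ch_apply, pr_apply]

lemma ch_ne_one (k : Fin 2 → ℤ) (x : Torus) (h : pr k x ≠ 0) : ch k x ≠ 1 := by
  intro h1
  apply h
  apply AddCircle.injective_toCircle (T := (1:ℝ)) one_ne_zero
  rw [AddCircle.toCircle_zero]
  ext
  exact h1

def eT (x : Torus) : UnitAddTorus (Fin 2) := ![x.1, x.2]

lemma eT_cont : Continuous eT := by
  apply continuous_pi
  intro i
  fin_cases i
  · exact continuous_fst
  · exact continuous_snd

lemma mFourier_eT (k : Fin 2 → ℤ) (x : Torus) : UnitAddTorus.mFourier k (eT x) = ch k x := by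
  simp only [UnitAddTorus.mFourier, ContinuousMap.coe_mk, Fin.prod_univ_two, ch_apply, pr_apply,
    AddCircle.toCircle_add, fourier_apply, Circle.coe_mul]
  rfl

lemma integrable_cont (P : Measure Torus) [IsProbabilityMeasure P] {E : Type*} [NormedAddCommGroup E]
    [SecondCountableTopology E] 
    (g : C(Torus, E)) : Integrable (fun x => g x) P := by
  apply Integrable.of_bound (C := ‖g‖) g.continuous.aestronglyMeasurable
  exact Eventually.of_forall fun x => g.norm_coe_le_norm x

noncomputable def intL (P : Measure Torus) [IsProbabilityMeasure P] :
    C(UnitAddTorus (Fin 2), ℂ) →L[ℂ] ℂ :=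
  LinearMap.mkContinuous
    { toFun := fun g => ∫ x, g (eT x) ∂P
      map_add' := fun g h => by
        have h1 := integrable_cont P (g.comp ⟨eT, eT_cont⟩)
        have h2 := integrable_cont P (h.comp ⟨eT, eT_cont⟩)
        exact integral_add h1 h2
      map_smul' := fun c g => by
        simp only [ContinuousMap.coe_smul, Pi.smul_apply, RingHom.id_apply]
        exact integral_smul c _ } 1 (by
    intro g
    rw [one_mul]
    have := norm_integral_le_of_norm_le_const (μ := P) (f := fun x => g (eT x)) (C := ‖g‖)
      (Eventually.of_forall fun x => g.norm_coe_le_norm _)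
    simpa using this)

lemma intL_apply (P : Measure Torus) [IsProbabilityMeasure P] (g : C(UnitAddTorus (Fin 2), ℂ)) :
    intL P g = ∫ x, g (eT x) ∂P := rfl

lemma meas_ext (P P' : Measure Torus) [IsProbabilityMeasure P] [IsProbabilityMeasure P']
    (h : ∀ k, ∫ x, ch k x ∂P = ∫ x, ch k x ∂P') : P = P' := by
  have hL : intL P = intL P' := by
    apply ContinuousLinearMap.ext_on (s := Set.range (UnitAddTorus.mFourier (d := Fin 2)))
    · rw [Submodule.dense_iff_topologicalClosure_eq_top]
      exact UnitAddTorus.span_mFourier_closure_eq_top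
    · rintro _ ⟨k, rfl⟩
      simp only [intL_apply, mFourier_eT, h]
  apply ext_of_forall_integral_eq_of_IsFiniteMeasure
  intro f
  let g : C(UnitAddTorus (Fin 2), ℂ) := ⟨fun y => ((f (y 0, y 1) : ℝ) : ℂ), by fun_prop⟩
  have hg := DFunLike.congr_fun hL g
  simp only [intL_apply] at hg
  have e : ∀ x : Torus, g (eT x) = ((f x : ℝ) : ℂ) := fun x => rfl
  simp only [e, integral_complex_ofReal] at hg
  exact_mod_cast hg

lemma ch_re_cont (k : Fin 2 → ℤ) : Continuous fun x => (ch k x).re :=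
  Complex.continuous_re.comp (ch k).continuous
lemma ch_im_cont (k : Fin 2 → ℤ) : Continuous fun x => (ch k x).im :=
  Complex.continuous_im.comp (ch k).continuous

lemma haar_ch (P : Measure Torus) [IsProbabilityMeasure P] [P.IsAddLeftInvariant]
    (k : Fin 2 → ℤ) (x0 : Torus) (h : pr k x0 ≠ 0) : ∫ x, ch k x ∂P = 0 := by
  have h1 := integral_add_left_eq_self (μ := P) (fun x => ch k x) x0
  simp only [ch_add] at h1
  rw [integral_const_mul] at h1
  have h2 := ch_ne_one k x0 h
  have : (ch k x0 - 1) * ∫ x, ch k x ∂P = 0 := by linear_combination h1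
  rcases mul_eq_zero.1 this with h3 | h3
  · exact absurd (sub_eq_zero.1 h3) h2
  · exact h3

lemma sum_ker (N : Matrix (Fin 2) (Fin 2) ℤ) (S : Finset Torus) (hS : ∀ x, x ∈ S ↔ tor N x = 0)
    (k : Fin 2 → ℤ) (x0 : Torus) (hx0 : tor N x0 = 0) (h : pr k x0 ≠ 0) :
    ∑ x ∈ S, ch k x = 0 := by
  have h1 : ∑ x ∈ S, ch k (x0 + x) = ∑ x ∈ S, ch k x := by
    apply Finset.sum_bij' (fun x _ => x0 + x) (fun x _ => -x0 + x)
    · intro x hx; rw [hS] at hx ⊢; rw [map_add, hx, hx0, add_zero]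
    · intro x hx; rw [hS] at hx ⊢; rw [map_add, map_neg, hx, hx0, add_zero, neg_zero]
    · intro x hx; abel
    · intro x hx; abel
    · intro x hx; rfl
  simp only [ch_add] at h1
  rw [← Finset.mul_sum] at h1
  have h2 := ch_ne_one k x0 h
  have : (ch k x0 - 1) * ∑ x ∈ S, ch k x = 0 := by linear_combination h1
  rcases mul_eq_zero.1 this with h3 | h3
  · exact absurd (sub_eq_zero.1 h3) h2
  · exact h3

lemma ker_card_big (N : Matrix (Fin 2) (Fin 2) ℤ) (S : Finset Torus)
    (hS : ∀ x, x ∈ S ↔ tor N x = 0) (K : ℕ)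
    (h : ∀ j : ℕ, 1 ≤ j → j ≤ K → ∃ x, tor N x = 0 ∧ pr ![(j:ℤ), 0] x ≠ 0) : K < S.card := by
  by_contra! hle
  have hc1 : 1 ≤ S.card := Finset.card_pos.2 ⟨0, (hS 0).2 (map_zero _)⟩
  obtain ⟨x, hx, hne⟩ := h S.card hc1 hle
  apply hne
  have hmem : x ∈ (tor N).ker := hx
  have hcard : Nat.card (tor N).ker = S.card := Nat.subtype_card S hS
  have h1 : Nat.card (tor N).ker • (⟨x, hmem⟩ : (tor N).ker) = 0 := card_nsmul_eq_zero'
  rw [hcard] at h1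
  have h2 : S.card • x = 0 := congrArg Subtype.val h1
  have h3 : S.card • x.1 = 0 := congrArg Prod.fst h2
  rw [pr_apply]
  simp only [Matrix.cons_val_zero, Matrix.cons_val_one, zero_smul, add_zero, natCast_zsmul]
  exact h3

lemma H_finite : {x : Torus | -x = x}.Finite := by
  have hf := AddCircle.finite_torsion (1:ℝ) (n := 2) (by norm_num)
  refine (hf.prod hf).subset ?_
  intro x hx
  have h : -x = x := hx
  have h2 : 2 • x = 0 := by
    rw [two_nsmul]; nth_rw 1 [← h]; simp
  exact ⟨congrArg Prod.fst h2, congrArg Prod.snd h2⟩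

lemma nu_integral (fA : Torus ≃ₜ Torus) (r : ℕ) (S : Finset Torus) (hS : Pstar fA r = ↑S)
    (g : Torus → ℝ) : ∫ x, g x ∂(nuMeas fA r) = (S.card : ℝ)⁻¹ * ∑ x ∈ S, g x := by
  unfold nuMeas
  rw [hS, integral_smul_measure, Measure.sum_fintype,
    integral_finsetSum_measure]
  · simp only [integral_dirac]
    simp [Finset.sum_attach S g]
  · intro i _
    exact integrable_dirac (by simp)

open Classical in
lemma pstar_struct (A : Matrix (Fin 2) (Fin 2) ℤ) (fA : Torus ≃ₜ Torus)
    (hf : ∀ r x, fA^[r] x = tor (A ^ r) x) (r : ℕ) (S1 S2 H : Finset Torus)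
    (h1 : ∀ x, x ∈ S1 ↔ tor (A ^ r - (1:ℤ) • (1 : Matrix (Fin 2) (Fin 2) ℤ)) x = 0)
    (h2 : ∀ x, x ∈ S2 ↔ tor (A ^ r - (-1:ℤ) • (1 : Matrix (Fin 2) (Fin 2) ℤ)) x = 0)
    (hH : ∀ x, x ∈ H ↔ -x = x) :
    Pstar fA r = ↑((S1 ∪ S2) \ H) ∧ S1 ∩ S2 ⊆ H := by
  have e1 : ∀ x, x ∈ S1 ↔ fA^[r] x = x := by
    intro x; rw [h1, tor_sub_int, one_smul, sub_eq_zero, hf]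
  have e2 : ∀ x, x ∈ S2 ↔ fA^[r] x = -x := by
    intro x; rw [h2, tor_sub_int, neg_one_smul, sub_eq_zero, hf]
  constructor
  · ext x
    simp [Pstar, e1, e2, hH]
  · intro x hx
    rw [Finset.mem_inter, e1, e2] at hx
    rw [hH, ← hx.2, hx.1]

open Classical in
lemma sum_struct (S1 S2 H : Finset Torus) (hH : S1 ∩ S2 ⊆ H) (g : Torus → ℂ)
    (hg : ∀ x, ‖g x‖ = 1) (h1 : ∑ x ∈ S1, g x = 0) (h2 : ∑ x ∈ S2, g x = 0) :
    ‖∑ x ∈ (S1 ∪ S2) \ H, g x‖ ≤ 2 * H.card := by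
  have hb : ∀ T : Finset Torus, T ⊆ H → ‖∑ x ∈ T, g x‖ ≤ H.card := by
    intro T hT
    refine (norm_sum_le _ _).trans ?_
    simp only [hg, Finset.sum_const, nsmul_eq_mul, mul_one]
    exact_mod_cast Finset.card_le_card hT
  have e1 := Finset.sum_union_inter (s₁ := S1) (s₂ := S2) (f := g)
  have e2 := Finset.sum_inter_add_sum_sdiff (S1 ∪ S2) H g
  have : ∑ x ∈ (S1 ∪ S2) \ H, g x =
      - (∑ x ∈ S1 ∩ S2, g x) - ∑ x ∈ (S1 ∪ S2) ∩ H, g x := by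
    linear_combination e1 + e2 + h1 + h2
  rw [this]
  refine (norm_sub_le _ _).trans ?_
  rw [norm_neg]
  have := hb _ hH
  have := hb ((S1 ∪ S2) ∩ H) Finset.inter_subset_right
  linarith

open Classical in
lemma nu_bound (A : Matrix (Fin 2) (Fin 2) ℤ) (hdet : A 0 0 * A 1 1 - A 0 1 * A 1 0 = 1)
    (lam : ℝ) (hlam : 1 < lam) (htr : (A 0 0 : ℝ) + A 1 1 = lam + lam⁻¹)
    (fA : Torus ≃ₜ Torus) (hf : ∀ r x, fA^[r] x = tor (A ^ r) x)
    (k : Fin 2 → ℤ) (hk : k ≠ 0) (L : ℂ →L[ℝ] ℝ) (hL : ∀ z, |L z| ≤ ‖z‖) (C : ℝ) (hC : 0 < C) :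
    ∀ᶠ r in atTop, |∫ x, L (ch k x) ∂(nuMeas fA r)| ≤ C := by
  set H := H_finite.toFinset with hHdef
  have hH : ∀ x, x ∈ H ↔ -x = x := by intro x; simp [hHdef]
  obtain ⟨K, hK⟩ := exists_nat_gt (2 * H.card / C)
  have hall : ∀ᶠ r in atTop, ∀ j ∈ Finset.Icc 1 (K + H.card), ∀ s : ℤ, (s = 1 ∨ s = -1) →
      (A ^ r - s • (1 : Matrix (Fin 2) (Fin 2) ℤ)).det ≠ 0 ∧
      ∃ x, tor (A ^ r - s • (1 : Matrix (Fin 2) (Fin 2) ℤ)) x = 0 ∧ pr ![(j:ℤ), 0] x ≠ 0 := by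
    rw [Filter.eventually_all_finset]
    intro j hj
    apply char_nontriv A hdet lam hlam htr
    intro h
    have := congrFun h 0
    simp at this hj
    omega
  filter_upwards [hall, char_nontriv A hdet lam hlam htr k hk] with r hr1 hr2
  obtain ⟨d1, x1, hx1, hp1⟩ := hr2 1 (Or.inl rfl)
  obtain ⟨d2, x2, hx2, hp2⟩ := hr2 (-1) (Or.inr rfl)
  set S1 := (tor_ker_finite _ d1).toFinset with hS1
  set S2 := (tor_ker_finite _ d2).toFinset with hS2
  have h1 : ∀ x, x ∈ S1 ↔ tor (A ^ r - (1:ℤ) • (1 : Matrix (Fin 2) (Fin 2) ℤ)) x = 0 := by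
    intro x; rw [hS1, Set.Finite.mem_toFinset]; rfl
  have h2 : ∀ x, x ∈ S2 ↔ tor (A ^ r - (-1:ℤ) • (1 : Matrix (Fin 2) (Fin 2) ℤ)) x = 0 := by
    intro x; rw [hS2, Set.Finite.mem_toFinset]; rfl
  obtain ⟨hP, hsub⟩ := pstar_struct A fA hf r S1 S2 H h1 h2 hH
  have hsum := sum_struct S1 S2 H hsub (ch k) (ch_norm k) (sum_ker _ S1 h1 k x1 hx1 hp1)
    (sum_ker _ S2 h2 k x2 hx2 hp2)
  have hcard := ker_card_big _ S1 h1 (K + H.card) (fun j hj hj2 =>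
    (hr1 j (Finset.mem_Icc.2 ⟨hj, hj2⟩) 1 (Or.inl rfl)).2)
  rw [nu_integral fA r _ hP, ← map_sum, abs_mul]
  set T := (S1 ∪ S2) \ H with hT
  have hTc : K < T.card := by
    have : (S1 ∪ S2).card - H.card ≤ T.card := Finset.le_card_sdiff _ _
    have : S1.card ≤ (S1 ∪ S2).card := Finset.card_le_card Finset.subset_union_left
    omega
  have hTr : (K : ℝ) < T.card := by exact_mod_cast hTc
  have hT0 : (0 : ℝ) < T.card := lt_of_le_of_lt (Nat.cast_nonneg K) hTr
  rw [abs_of_pos (inv_pos.2 hT0), inv_mul_le_iff₀ hT0]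
  rw [div_lt_iff₀ hC] at hK
  refine (hL _).trans (hsum.trans ?_)
  nlinarith

lemma nu_eq (A : Matrix (Fin 2) (Fin 2) ℤ) (hdet : A 0 0 * A 1 1 - A 0 1 * A 1 0 = 1)
    (lam : ℝ) (hlam : 1 < lam) (htr : (A 0 0 : ℝ) + A 1 1 = lam + lam⁻¹)
    (fA : Torus ≃ₜ Torus) (hf : ∀ r x, fA^[r] x = tor (A ^ r) x)
    (ν : Measure Torus) (hprob : IsProbabilityMeasure ν)
    (φ : ℕ → ℕ) (hφ : StrictMono φ)
    (hlim : ∀ g : C(Torus, ℝ),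
      Tendsto (fun r : ℕ => ∫ x, g x ∂(nuMeas fA (φ r))) atTop
        (nhds (∫ x, g x ∂ν)))
    (P : Measure Torus) [IsProbabilityMeasure P] [P.IsAddLeftInvariant] : ν = P := by
  apply meas_ext
  intro k
  by_cases hk : k = 0
  · subst hk; simp [ch_zero]
  obtain ⟨r, hr⟩ := (char_nontriv A hdet lam hlam htr k hk).exists
  obtain ⟨-, x0, -, hx0⟩ := hr 1 (Or.inl rfl)
  rw [haar_ch P k x0 hx0]
  have key : ∀ L : ℂ →L[ℝ] ℝ, (∀ z, |L z| ≤ ‖z‖) → ∫ x, L (ch k x) ∂ν = 0 := by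
    intro L hL
    have ht := hlim ⟨fun x => L (ch k x), L.continuous.comp (ch k).continuous⟩
    refine tendsto_nhds_unique ht ?_
    rw [Metric.tendsto_nhds]
    intro C hC
    have := hφ.tendsto_atTop.eventually
      (nu_bound A hdet lam hlam htr fA hf k hk L hL (C / 2) (by positivity))
    filter_upwards [this] with r hr
    rw [dist_zero_right, Real.norm_eq_abs]
    exact lt_of_le_of_lt hr (by linarith)
  have hre := key Complex.reCLM Complex.abs_re_le_norm
  have him := key Complex.imCLM Complex.abs_im_le_norm
  have hi := integrable_cont ν (ch k)
  apply Complex.ext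
  · rw [Complex.zero_re, ← hre]; exact (integral_re hi).symm
  · rw [Complex.zero_im, ← him]; exact (integral_im hi).symm

lemma unitvol : (volume : Measure (AddCircle (1:ℝ))) Set.univ = 1 := by
  rw [AddCircle.measure_univ]; simp

instance : IsProbabilityMeasure (volume : Measure (AddCircle (1:ℝ))) := ⟨unitvol⟩

instance : (volume : Measure Torus).IsAddHaarMeasure :=
  inferInstanceAs
    ((volume : Measure (AddCircle (1:ℝ))).prod (volume : Measure (AddCircle (1:ℝ)))).IsAddHaarMeasure

lemma exists_L (A : Matrix.SpecialLinearGroup (Fin 2) ℤ)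
    (lam : ℝ) (hlam : 1 < lam)
    (htr : ((A.1 0 0 : ℤ) : ℝ) + ((A.1 1 1 : ℤ) : ℝ) = lam + lam⁻¹) :
    ∃ (l : ℝ × ℝ → ℝ × ℝ) (C κ : ℝ), 0 < C ∧ 0 < κ ∧ (∀ v, ‖l v‖ ≤ C * ‖v‖) ∧
      (∀ v, ‖v‖ ≤ C * ‖l v‖) ∧
      (∀ v, l (matAct A v) = (lam * (l v).1, lam⁻¹ * (l v).2)) ∧
      ∀ p q : ℝ, 0 ≤ p → 0 ≤ q →
        volume {v | |(l v).1| ≤ p ∧ |(l v).2| ≤ q} = ENNReal.ofReal (κ * p * q) := by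
  have hdet : A.1 0 0 * A.1 1 1 - A.1 0 1 * A.1 1 0 = 1 := by
    rw [← Matrix.det_fin_two]; exact A.2
  have hdet' : (A.1 0 0 : ℝ) * A.1 1 1 - A.1 0 1 * A.1 1 0 = 1 := by exact_mod_cast hdet
  generalize ha : ((A.1 0 0 : ℤ) : ℝ) = a at *
  generalize hb : ((A.1 0 1 : ℤ) : ℝ) = b at *
  generalize hc : ((A.1 1 0 : ℤ) : ℝ) = c at *
  generalize hd : ((A.1 1 1 : ℤ) : ℝ) = d at *
  have hl : lam * lam⁻¹ = 1 := mul_inv_cancel₀ (by linarith)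
  have hinv : lam⁻¹ < 1 := inv_lt_one_of_one_lt₀ hlam
  have hinv0 : 0 < lam⁻¹ := by positivity
  have hc0 : c ≠ 0 := by
    intro h0
    have h00 : A.1 1 0 = 0 := by rw [h0] at hc; exact_mod_cast hc
    rw [h00, mul_zero, sub_zero] at hdet
    have h2 : a + d > 2 := by
      rw [htr]
      nlinarith [mul_pos hinv0 (mul_pos (sub_pos.2 hlam) (sub_pos.2 hlam))]
    rcases Int.mul_eq_one_iff_eq_one_or_neg_one.1 hdet with ⟨h3, h4⟩ | ⟨h3, h4⟩ <;>
    · rw [h3] at ha; rw [h4] at hd; push_cast at ha hd; linarith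
  let L : ℝ × ℝ →ₗ[ℝ] ℝ × ℝ :=
    { toFun := fun v => (c * v.1 + (lam - a) * v.2, c * v.1 + (lam⁻¹ - a) * v.2)
      map_add' := fun v w => by ext <;> simp <;> ring
      map_smul' := fun t v => by ext <;> simp <;> ring }
  have hL : ∀ v, L v = (c * v.1 + (lam - a) * v.2, c * v.1 + (lam⁻¹ - a) * v.2) := fun _ => rfl
  have hker : LinearMap.ker L = ⊥ := by
    rw [LinearMap.ker_eq_bot']
    intro v hv
    rw [hL, Prod.mk_eq_zero] at hv
    have h2 : v.2 = 0 := by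
      have : (lam - lam⁻¹) * v.2 = 0 := by linear_combination hv.1 - hv.2
      rcases mul_eq_zero.1 this with h | h
      · linarith
      · exact h
    have h1 : v.1 = 0 := by
      have := hv.1; rw [h2] at this; simpa [hc0] using this
    exact Prod.ext h1 h2
  have hdetL : LinearMap.det L ≠ 0 := by
    intro h
    have := LinearMap.bot_lt_ker_of_det_eq_zero h
    rw [hker] at this; exact lt_irrefl _ this
  obtain ⟨K, hK, hanti⟩ := L.exists_antilipschitzWith hker
  have hanti' : ∀ v, ‖v‖ ≤ K * ‖L v‖ := by
    intro v
    have := hanti.le_mul_dist v 0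
    simpa using this
  have hlip : ∀ v, ‖L v‖ ≤ ‖L.toContinuousLinearMap‖ * ‖v‖ := fun v =>
    L.toContinuousLinearMap.le_opNorm v
  refine ⟨L, max K ‖L.toContinuousLinearMap‖, 4 * |(LinearMap.det L)⁻¹|, ?_, ?_, ?_, ?_, ?_, ?_⟩
  · exact lt_max_of_lt_left hK
  · have := inv_ne_zero hdetL; positivity
  · intro v; exact (hlip v).trans (by gcongr; exact le_max_right _ _)
  · intro v; exact (hanti' v).trans (by gcongr; exact le_max_left _ _)
  · intro v
    simp only [hL, matAct, ha, hb, hc, hd]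
    ext
    · simp only
      linear_combination -v.2 * hdet' + v.2 * lam * htr + v.2 * hl
    · simp only
      linear_combination -v.2 * hdet' + v.2 * lam⁻¹ * htr + v.2 * hl
  · intro p q hp hq
    have : {v | |(L v).1| ≤ p ∧ |(L v).2| ≤ q} = L ⁻¹' (Set.Icc (-p) p ×ˢ Set.Icc (-q) q) := by
      ext v; simp only [Set.mem_ofPred_eq, Set.mem_preimage, Set.mem_prod, Set.mem_Icc, abs_le]
    rw [this, Measure.addHaar_preimage_linearMap _ hdetL, Measure.volume_eq_prod,
      Measure.prod_prod, Real.volume_Icc, Real.volume_Icc, ← ENNReal.ofReal_mul (by linarith),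
      ← ENNReal.ofReal_mul (abs_nonneg _)]
    congr 1; ring

lemma norm_torusMk_le (v : ℝ × ℝ) : ‖torusMk v‖ ≤ ‖v‖ := by
  have h : ∀ x : ℝ, ‖(x : AddCircle (1:ℝ))‖ ≤ ‖x‖ := fun x => by
    exact QuotientAddGroup.norm_mk_le_norm
  exact max_le_max (h _) (h _)

lemma norm_torusMk_eq (v : ℝ × ℝ) (hv : ‖v‖ ≤ 1 / 2) : ‖torusMk v‖ = ‖v‖ := by
  have h : ∀ x : ℝ, ‖x‖ ≤ 1 / 2 → ‖(x : AddCircle (1:ℝ))‖ = ‖x‖ := fun x hx => by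
    rw [Real.norm_eq_abs] at *
    rw [AddCircle.norm_coe_eq_abs_iff 1 one_ne_zero]; simpa using hx
  rw [Prod.norm_def, Prod.norm_def]
  congr 1
  · exact h _ ((norm_fst_le v).trans hv)
  · exact h _ ((norm_snd_le v).trans hv)

def I2 : Set (ℝ × ℝ) := Set.Ioc (-1/2 : ℝ) (-1/2 + 1) ×ˢ Set.Ioc (-1/2 : ℝ) (-1/2 + 1)

lemma mp_torusMk : MeasurePreserving torusMk (volume.restrict I2) volume := by
  have h := AddCircle.measurePreserving_mk (1:ℝ) (-1/2)
  have := h.prod h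
  rw [Measure.prod_restrict] at this
  exact this

lemma vol_torus (S : Set Torus) (hS : MeasurableSet S) :
    volume S = volume (torusMk ⁻¹' S ∩ I2) := by
  rw [← mp_torusMk.measure_preimage hS.nullMeasurableSet, Measure.restrict_apply]
  exact mp_torusMk.measurable hS

lemma bb_closed (fA : Torus ≃ₜ Torus) (x : Torus) (ε : ℝ) (n : ℕ) :
    IsClosed (BowenBall (⇑fA) x ε n) := by
  have : BowenBall (⇑fA) x ε n = ⋂ k, ⋂ (_ : k < n), {z | dist (fA^[k] z) (fA^[k] x) ≤ ε} := by
    ext z; simp [BowenBall]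
  rw [this]
  refine isClosed_iInter fun k => isClosed_iInter fun _ => isClosed_le ?_ continuous_const
  exact (fA.continuous.iterate k).dist continuous_const

lemma bb_translate (A : Matrix (Fin 2) (Fin 2) ℤ) (fA : Torus ≃ₜ Torus)
    (hf : ∀ r x, fA^[r] x = tor (A ^ r) x) (x : Torus) (ε : ℝ) (n : ℕ) :
    volume (BowenBall (⇑fA) x ε n) = volume (BowenBall (⇑fA) 0 ε n) := by
  have : BowenBall (⇑fA) x ε n = (fun z => z + (-x)) ⁻¹' BowenBall (⇑fA) 0 ε n := by
    ext z
    simp only [BowenBall, Set.mem_preimage, Set.mem_ofPred_eq, hf, dist_eq_norm, map_zero, sub_zero,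
      ← sub_eq_add_neg, map_sub]
  rw [this, measure_preimage_add_right]

lemma f_mp (A : Matrix (Fin 2) (Fin 2) ℤ) (fA : Torus ≃ₜ Torus)
    (hf : ∀ r x, fA^[r] x = tor (A ^ r) x) : MeasurePreserving fA (volume : Measure Torus) volume := by
  have e : ∀ x, tor A x = fA x := fun x => by simpa using (hf 1 x).symm
  have e' : (⇑(tor A) : Torus → Torus) = fA := funext e
  have := AddMonoidHom.measurePreserving (f := tor A) (μ := (volume : Measure Torus)) (ν := volume)
    (by rw [e']; exact fA.continuous) (by rw [e']; exact fA.surjective) rfl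
  rwa [e'] at this

lemma l_iter (A : Matrix.SpecialLinearGroup (Fin 2) ℤ) (lam : ℝ) (l : ℝ × ℝ → ℝ × ℝ)
    (hl : ∀ v, l (matAct A v) = (lam * (l v).1, lam⁻¹ * (l v).2)) (n : ℕ) (v : ℝ × ℝ) :
    l ((matAct A)^[n] v) = (lam ^ n * (l v).1, (lam⁻¹) ^ n * (l v).2) := by
  induction n with
  | zero => simp
  | succ n ih =>
    rw [Function.iterate_succ_apply', hl, ih]
    ext <;> simp only <;> ring

lemma f_iter_mk (A : Matrix.SpecialLinearGroup (Fin 2) ℤ) (fA : Torus ≃ₜ Torus)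
    (hfA : ∀ v : ℝ × ℝ, fA (torusMk v) = torusMk (matAct A v)) (n : ℕ) (v : ℝ × ℝ) :
    fA^[n] (torusMk v) = torusMk ((matAct A)^[n] v) := by
  induction n with
  | zero => rfl
  | succ n ih => rw [Function.iterate_succ_apply', Function.iterate_succ_apply', ih, hfA]

lemma f_iter_tor (A : Matrix.SpecialLinearGroup (Fin 2) ℤ) (fA : Torus ≃ₜ Torus)
    (hfA : ∀ v : ℝ × ℝ, fA (torusMk v) = torusMk (matAct A v)) (n : ℕ) (x : Torus) :
    fA^[n] x = tor (A.1 ^ n) x := by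
  induction n with
  | zero => simp [tor_one]
  | succ n ih =>
    rw [Function.iterate_succ_apply', ih, pow_succ', tor_mul]
    obtain ⟨v, hv⟩ := torusMk_surj (tor (A.1 ^ n) x)
    rw [← hv, hfA, tor_mk]; rfl

lemma mem_bb_zero (A : Matrix.SpecialLinearGroup (Fin 2) ℤ) (fA : Torus ≃ₜ Torus)
    (hfA : ∀ v : ℝ × ℝ, fA (torusMk v) = torusMk (matAct A v)) (ε : ℝ) (n : ℕ) (v : ℝ × ℝ) :
    torusMk v ∈ BowenBall (⇑fA) 0 ε n ↔ ∀ k < n, ‖torusMk ((matAct A)^[k] v)‖ ≤ ε := by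
  have h0 : ∀ k, fA^[k] 0 = 0 := fun k => by rw [f_iter_tor A fA hfA, map_zero]
  simp only [BowenBall, Set.mem_ofPred_eq, h0, dist_zero_right, f_iter_mk A fA hfA]

lemma lower (A : Matrix.SpecialLinearGroup (Fin 2) ℤ)
    (lam : ℝ) (hlam : 1 < lam)
    (htr : ((A.1 0 0 : ℤ) : ℝ) + ((A.1 1 1 : ℤ) : ℝ) = lam + lam⁻¹)
    (fA : Torus ≃ₜ Torus) (hfA : ∀ v : ℝ × ℝ, fA (torusMk v) = torusMk (matAct A v))
    (ε : ℝ) (hε : 0 < ε) :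
    ∃ a : ℝ, 0 < a ∧ ∀ n : ℕ, ENNReal.ofReal (a * (lam⁻¹) ^ n) ≤
      volume (BowenBall (⇑fA) 0 ε n) := by
  obtain ⟨l, C, κ, hC, hκ, h1, h2, h3, h4⟩ := exists_L A lam hlam htr
  set a := min ε (1/4) / C with ha
  have ha0 : 0 < a := by positivity
  have hinv0 : 0 < lam⁻¹ := by positivity
  have hinv : lam⁻¹ < 1 := inv_lt_one_of_one_lt₀ hlam
  have hCa : C * a = min ε (1/4) := by rw [ha]; field_simp
  refine ⟨κ * a * a, by positivity, fun n => ?_⟩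
  rw [vol_torus _ (bb_closed fA 0 ε n).measurableSet]
  have e : κ * a * a * (lam⁻¹) ^ n = κ * (a * (lam⁻¹) ^ n) * a := by ring
  rw [e, ← h4 _ _ (by positivity) ha0.le]
  apply measure_mono
  rintro v ⟨hv1, hv2⟩
  have hbd : ∀ k ≤ n, ‖(matAct A)^[k] v‖ ≤ min ε (1/4) := by
    intro k hk
    refine (h2 _).trans ?_
    rw [← hCa]
    gcongr
    rw [l_iter A lam l h3]
    have hk1 : (lam⁻¹) ^ k ≤ 1 := pow_le_one₀ hinv0.le hinv.le
    refine max_le ?_ ?_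
    · simp only [norm_mul, Real.norm_eq_abs, abs_pow, abs_of_pos (show 0 < lam by linarith)]
      calc lam ^ k * |(l v).1| ≤ lam ^ k * (a * (lam⁻¹) ^ n) := by gcongr
        _ ≤ lam ^ n * (a * (lam⁻¹) ^ n) := by gcongr; exact hlam.le
        _ = a * (lam * lam⁻¹) ^ n := by rw [mul_pow]; ring
        _ = a := by rw [mul_inv_cancel₀ (by linarith)]; simp
    · simp only [norm_mul, Real.norm_eq_abs, abs_pow, abs_of_pos hinv0]
      calc (lam⁻¹) ^ k * |(l v).2| ≤ 1 * a := by gcongr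
        _ = a := one_mul a
  refine ⟨?_, ?_⟩
  · rw [Set.mem_preimage, mem_bb_zero A fA hfA]
    intro k hk
    exact (norm_torusMk_le _).trans ((hbd k hk.le).trans (min_le_left _ _))
  · have h0 := (hbd 0 (Nat.zero_le _)).trans (min_le_right _ _)
    simp only [Function.iterate_zero, id_eq] at h0
    have hx := (norm_fst_le v).trans h0
    have hy := (norm_snd_le v).trans h0
    rw [Real.norm_eq_abs, abs_le] at hx hy
    refine ⟨⟨?_, ?_⟩, ⟨?_, ?_⟩⟩ <;> linarith [hx.1, hx.2, hy.1, hy.2]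

lemma upper0 (A : Matrix.SpecialLinearGroup (Fin 2) ℤ)
    (lam : ℝ) (hlam : 1 < lam)
    (htr : ((A.1 0 0 : ℤ) : ℝ) + ((A.1 1 1 : ℤ) : ℝ) = lam + lam⁻¹)
    (fA : Torus ≃ₜ Torus) (hfA : ∀ v : ℝ × ℝ, fA (torusMk v) = torusMk (matAct A v)) :
    ∃ δ b : ℝ, 0 < δ ∧ 0 < b ∧ ∀ n : ℕ, 
      volume (BowenBall (⇑fA) 0 δ (n + 1)) ≤ ENNReal.ofReal (b * (lam⁻¹) ^ n) := by
  obtain ⟨l, C, κ, hC, hκ, h1, h2, h3, h4⟩ := exists_L A lam hlam htr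
  have hinv0 : 0 < lam⁻¹ := by positivity
  have hinv : lam⁻¹ < 1 := inv_lt_one_of_one_lt₀ hlam
  have hl0 : 0 < lam := by linarith
  have hA : ∀ v, ‖matAct A v‖ ≤ C * (lam * (C * ‖v‖)) := by
    intro v
    refine (h2 _).trans ?_
    gcongr
    rw [h3]
    have hx := norm_fst_le (l v)
    have hy := norm_snd_le (l v)
    have hv := h1 v
    refine max_le ?_ ?_
    · simp only [norm_mul, Real.norm_eq_abs, abs_of_pos hl0] at *
      gcongr; linarith
    · simp only [norm_mul, Real.norm_eq_abs, abs_of_pos hinv0] at *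
      gcongr
      · linarith
      · linarith
  set K := C * lam * C with hK
  have hK0 : 0 < K := by positivity
  set δ := min (1/4) (1 / (2 * K)) with hδ
  have hδ0 : 0 < δ := by positivity
  have hKδ : K * δ ≤ 1 / 2 := by
    calc K * δ ≤ K * (1 / (2 * K)) := by gcongr; exact min_le_right _ _
      _ = 1 / 2 := by field_simp
  refine ⟨δ, κ * (C * δ) * (C * δ), hδ0, by positivity, fun n => ?_⟩
  rw [vol_torus _ (bb_closed fA 0 δ _).measurableSet]
  have e : κ * (C * δ) * (C * δ) * (lam⁻¹) ^ n = κ * (C * δ * (lam⁻¹) ^ n) * (C * δ) := by ring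
  rw [e, ← h4 _ _ (by positivity) (by positivity)]
  apply measure_mono
  rintro v ⟨hv1, hv2⟩
  rw [Set.mem_preimage, mem_bb_zero A fA hfA] at hv1
  have hbd : ∀ k < n + 1, ‖(matAct A)^[k] v‖ ≤ δ := by
    intro k
    induction k with
    | zero =>
      intro hk
      have := hv1 0 hk
      simp only [Function.iterate_zero, id_eq] at this ⊢
      rwa [norm_torusMk_eq] at this
      obtain ⟨⟨a1, a2⟩, ⟨a3, a4⟩⟩ := hv2
      refine max_le ?_ ?_ <;> rw [Real.norm_eq_abs, abs_le] <;> constructor <;> linarith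
    | succ k ih =>
      intro hk
      have := hv1 (k + 1) hk
      rwa [norm_torusMk_eq] at this
      rw [Function.iterate_succ_apply']
      refine (hA _).trans ?_
      have h := ih (by omega)
      calc C * (lam * (C * ‖(matAct A)^[k] v‖)) = K * ‖(matAct A)^[k] v‖ := by rw [hK]; ring
        _ ≤ K * δ := by gcongr
        _ ≤ 1 / 2 := hKδ
  constructor
  · have h := (norm_fst_le _).trans ((h1 _).trans
      (mul_le_mul_of_nonneg_left (hbd n (by omega)) hC.le))
    rw [l_iter A lam l h3] at h
    simp only [norm_mul, Real.norm_eq_abs, abs_pow, abs_of_pos hl0] at h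
    rw [inv_pow, ← div_eq_mul_inv, le_div_iff₀ (by positivity)]
    linarith
  · have h := (norm_snd_le _).trans ((h1 _).trans
      (mul_le_mul_of_nonneg_left (hbd 0 (by omega)) hC.le))
    simpa using h

lemma zIter_cont (f : Torus ≃ₜ Torus) (t : ℤ) : Continuous (zIter f t) := by
  have key : ∀ n : ℕ, ∀ e : Torus ≃ Torus, Continuous e → Continuous ⇑(e ^ n) := by
    intro n e he
    induction n with
    | zero => exact continuous_id
    | succ n ih => rw [pow_succ]; exact ih.comp he
  unfold zIter
  cases t with
  | ofNat n => exact key n f.toEquiv f.continuous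
  | negSucc n =>
    rw [zpow_negSucc, ← inv_pow]
    exact key (n + 1) (f.toEquiv⁻¹) f.symm.continuous

lemma zIter_nat (f : Torus ≃ₜ Torus) (n : ℕ) (x : Torus) : zIter f n x = f^[n] x := by
  unfold zIter
  rw [zpow_natCast]
  induction n with
  | zero => rfl
  | succ n ih => rw [pow_succ', Function.iterate_succ_apply', ← ih]; rfl

lemma zIter_add (f : Torus ≃ₜ Torus) (s t : ℤ) (x : Torus) :
    zIter f (s + t) x = zIter f s (zIter f t x) := by
  unfold zIter
  rw [_root_.zpow_add]; rfl

lemma zIter_zero (f : Torus ≃ₜ Torus) (h : f 0 = 0) (t : ℤ) : zIter f t 0 = 0 := by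
  have hn : ∀ n : ℕ, zIter f n 0 = 0 := by
    intro n; rw [zIter_nat]
    exact Function.iterate_fixed h n
  cases t with
  | ofNat n => exact hn n
  | negSucc n =>
    have h1 := zIter_add f (Int.negSucc n) ((n + 1 : ℕ) : ℤ) 0
    rw [hn] at h1
    rw [← h1]
    have : Int.negSucc n + ((n + 1 : ℕ) : ℤ) = 0 := by omega
    rw [this]; rfl

lemma expansive_unif (f : Torus ≃ₜ Torus) (h0 : f 0 = 0) (ε : ℝ)
    (hexp : ∀ x y : Torus, (∀ t : ℤ, dist (zIter f t x) (zIter f t y) ≤ ε) → x = y)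
    (δ : ℝ) (hδ : 0 < δ) :
    ∃ N : ℕ, ∀ z, (∀ t : ℤ, |t| ≤ N → ‖zIter f t z‖ ≤ ε) → ‖z‖ ≤ δ := by
  by_contra! hcon
  let T : ℕ → Set Torus := fun N =>
    (⋂ t : ℤ, ⋂ (_ : |t| ≤ N), {z | ‖zIter f t z‖ ≤ ε}) ∩ {z | δ ≤ ‖z‖}
  have hcl : ∀ N, IsClosed (T N) := by
    intro N
    refine IsClosed.inter ?_ (isClosed_le continuous_const continuous_norm)
    exact isClosed_iInter fun t => isClosed_iInter fun _ =>
      isClosed_le (zIter_cont f t).norm continuous_const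
  have hne : (⋂ N, T N).Nonempty := by
    apply IsCompact.nonempty_iInter_of_sequence_nonempty_isCompact_isClosed
    · intro N z hz
      refine ⟨?_, hz.2⟩
      have := hz.1
      simp only [Set.mem_iInter] at this ⊢
      intro t ht
      exact this t (ht.trans (by push_cast; omega))
    · intro N
      obtain ⟨z, hz1, hz2⟩ := hcon N
      refine ⟨z, ?_, hz2.le⟩
      simp only [Set.mem_iInter]
      exact hz1
    · exact (hcl 0).isCompact
    · exact hcl
  obtain ⟨z, hz⟩ := hne
  rw [Set.mem_iInter] at hz
  have hz0 : z = 0 := by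
    apply hexp
    intro t
    rw [zIter_zero f h0, dist_zero_right]
    have := (hz t.natAbs).1
    simp only [Set.mem_iInter] at this
    exact this t (by simp)
  have := (hz 0).2
  rw [hz0] at this
  simp only [Set.mem_ofPred_eq, norm_zero] at this
  linarith

lemma upper (A : Matrix.SpecialLinearGroup (Fin 2) ℤ)
    (lam : ℝ) (hlam : 1 < lam)
    (htr : ((A.1 0 0 : ℤ) : ℝ) + ((A.1 1 1 : ℤ) : ℝ) = lam + lam⁻¹)
    (fA : Torus ≃ₜ Torus) (hfA : ∀ v : ℝ × ℝ, fA (torusMk v) = torusMk (matAct A v))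
    (ε : ℝ) 
    (hexp : ∀ x y : Torus, (∀ t : ℤ, dist (zIter fA t x) (zIter fA t y) ≤ ε) → x = y) :
    ∃ b : ℝ, 0 < b ∧ ∀ n : ℕ,
      volume (BowenBall (⇑fA) 0 ε n) ≤ ENNReal.ofReal (b * (lam⁻¹) ^ n) := by
  obtain ⟨δ, b, hδ, hb, hub⟩ := upper0 A lam hlam htr fA hfA
  have hf := f_iter_tor A fA hfA
  have h0 : fA 0 = 0 := by simpa using hf 1 0
  have h0k : ∀ k, fA^[k] 0 = 0 := fun k => by rw [hf, map_zero]
  obtain ⟨N, hN⟩ := expansive_unif fA h0 ε hexp δ hδ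
  have hl0 : 0 < lam := by linarith
  have hl1 : lam * lam⁻¹ = 1 := mul_inv_cancel₀ hl0.ne'
  refine ⟨(b + 1) * lam ^ (2 * N + 1), by positivity, fun n => ?_⟩
  by_cases hn : n ≤ 2 * N
  · refine prob_le_one.trans ?_
    rw [← ENNReal.ofReal_one]
    apply ENNReal.ofReal_le_ofReal
    calc (1:ℝ) = 1 * (lam ^ n * (lam⁻¹) ^ n) := by rw [← mul_pow, hl1]; simp
      _ ≤ (b + 1) * (lam ^ (2 * N + 1) * (lam⁻¹) ^ n) := by
        gcongr
        · linarith
        · exact hlam.le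
        · omega
      _ = _ := by ring
  · obtain ⟨m, rfl⟩ : ∃ m, n = m + 1 + 2 * N := ⟨n - 1 - 2 * N, by omega⟩
    have hsub : BowenBall (⇑fA) 0 ε (m + 1 + 2 * N) ⊆
        fA^[N] ⁻¹' (BowenBall (⇑fA) 0 δ (m + 1)) := by
      intro z hz
      simp only [Set.mem_preimage, BowenBall, Set.mem_ofPred_eq, h0k, dist_zero_right] at hz ⊢
      intro k hk
      rw [← Function.iterate_add_apply]
      apply hN
      intro t ht
      rw [← zIter_nat, ← zIter_add]
      rw [abs_le] at ht
      obtain ⟨j, hj⟩ : ∃ j : ℕ, t + ((k + N : ℕ) : ℤ) = j :=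
        ⟨(t + ((k + N : ℕ) : ℤ)).toNat, by push_cast; omega⟩
      rw [hj, zIter_nat]
      apply hz
      push_cast at hj
      omega
    refine (measure_mono hsub).trans ?_
    rw [((f_mp A.1 fA hf).iterate N).measure_preimage
      (bb_closed fA 0 δ (m + 1)).measurableSet.nullMeasurableSet]
    refine (hub m).trans (ENNReal.ofReal_le_ofReal ?_)
    have e : (b + 1) * lam ^ (2 * N + 1) * (lam⁻¹) ^ (m + 1 + 2 * N) = (b + 1) * (lam⁻¹) ^ m := by
      have : lam ^ (2 * N + 1) * (lam⁻¹) ^ (2 * N + 1) = 1 := by rw [← mul_pow, hl1, one_pow]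
      have e2 : m + 1 + 2 * N = m + (2 * N + 1) := by ring
      rw [e2, pow_add]
      linear_combination (b + 1) * (lam⁻¹) ^ m * this
    rw [e]
    gcongr
    linarith

end HomAux

/-- every weak* limit point of `(ν_r)` is a homogeneous measure:
its Bowen balls have measure comparable to `λ^{-n}`. -/
theorem limit_of_periodic_measures_homogeneous
    (A : Matrix.SpecialLinearGroup (Fin 2) ℤ)
    (lam : ℝ) (hlam : 1 < lam)
    (htr : ((A.1 0 0 : ℤ) : ℝ) + ((A.1 1 1 : ℤ) : ℝ) = lam + lam⁻¹)
    (fA : Torus ≃ₜ Torus)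
    (hfA : ∀ v : ℝ × ℝ, fA (torusMk v) = torusMk (matAct A v))
    -- ν is a weak* limit point of the sequence (ν_r)
    (ν : Measure Torus) (hprob : IsProbabilityMeasure ν)
    (φ : ℕ → ℕ) (hφ : StrictMono φ)
    (hlim : ∀ g : C(Torus, ℝ),
      Tendsto (fun r : ℕ => ∫ x, g x ∂(nuMeas fA (φ r))) atTop
        (nhds (∫ x, g x ∂ν))) :
    ∀ ε : ℝ, 0 < ε →
      (∀ x y : Torus,
        (∀ t : ℤ, dist (zIter fA t x) (zIter fA t y) ≤ 3 * ε) → x = y) →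
      ∃ Aε Bε : ℝ, 0 < Aε ∧ 0 < Bε ∧
        (∀ x : Torus, ∀ n : ℕ, 1 ≤ n →
          Aε * lam ^ (-(n:ℤ)) ≤ (ν (BowenBall (⇑fA) x ε n)).toReal ∧
          (ν (BowenBall (⇑fA) x ε n)).toReal ≤ Bε * lam ^ (-(n:ℤ))) ∧
        (∀ x y : Torus, ∀ n : ℕ, 1 ≤ n →
          (ν (BowenBall (⇑fA) y ε n)).toReal ≤
            (Bε / Aε) * (ν (BowenBall (⇑fA) x ε n)).toReal) := by
  intro ε hε hexp
  have hdet : A.1 0 0 * A.1 1 1 - A.1 0 1 * A.1 1 0 = 1 := by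
    rw [← Matrix.det_fin_two]; exact A.2
  have hf := HomAux.f_iter_tor A fA hfA
  have hν : ν = volume :=
    HomAux.nu_eq A.1 hdet lam hlam htr fA hf ν hprob φ hφ hlim volume
  subst hν
  obtain ⟨a, ha, hlow⟩ := HomAux.lower A lam hlam htr fA hfA ε hε
  obtain ⟨b, hb, hupp⟩ := HomAux.upper A lam hlam htr fA hfA ε (fun x y h =>
    hexp x y (fun t => (h t).trans (by linarith)))
  have hl0 : 0 < lam := by linarith
  have hz : ∀ n : ℕ, lam ^ (-(n:ℤ)) = (lam⁻¹) ^ n := by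
    intro n; rw [_root_.zpow_neg, zpow_natCast, inv_pow]
  have hlo : ∀ (x : Torus) (n : ℕ), a * lam ^ (-(n:ℤ)) ≤
      (volume (BowenBall (⇑fA) x ε n)).toReal := by
    intro x n
    rw [hz, HomAux.bb_translate A.1 fA hf, ← ENNReal.ofReal_le_iff_le_toReal (measure_ne_top _ _)]
    exact hlow n
  have hup : ∀ (x : Torus) (n : ℕ), (volume (BowenBall (⇑fA) x ε n)).toReal ≤
      b * lam ^ (-(n:ℤ)) := by
    intro x n
    rw [hz, HomAux.bb_translate A.1 fA hf]
    exact ENNReal.toReal_le_of_le_ofReal (by positivity) (hupp n)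
  refine ⟨a, b, ha, hb, fun x n _ => ⟨hlo x n, hup x n⟩, fun x y n _ => ?_⟩
  calc (volume (BowenBall (⇑fA) y ε n)).toReal ≤ b * lam ^ (-(n:ℤ)) := hup y n
    _ = (b / a) * (a * lam ^ (-(n:ℤ))) := by field_simp
    _ ≤ _ := by gcongr; exact hlo x n
end

section
/- The sequence (μ_n)_{n∈ℕ} of probability measures on S², defined by μ_n = (1/Per_n(g_A)) Σ_{p ∈ P_n(g_A)} δ_p, converges in the weak* topology to a Borel probability measure μ on S². -/
open Matrix

open MeasureTheory Filter

noncomputable def tHom (M : Matrix (Fin 2) (Fin 2) ℤ) : Torus →+ Torus :=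
  AddMonoidHom.mk' (fun x => (M 0 0 • x.1 + M 0 1 • x.2, M 1 0 • x.1 + M 1 1 • x.2)) (by
    intro a b
    ext
    · simp only [Prod.fst_add, Prod.snd_add]; module
    · simp only [Prod.fst_add, Prod.snd_add]; module)

theorem tHom_apply (M : Matrix (Fin 2) (Fin 2) ℤ) (x : Torus) :
    tHom M x = (M 0 0 • x.1 + M 0 1 • x.2, M 1 0 • x.1 + M 1 1 • x.2) := rfl

theorem tHom_mul (M N : Matrix (Fin 2) (Fin 2) ℤ) (x : Torus) :
    tHom (M * N) x = tHom M (tHom N x) := by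
  simp only [tHom_apply, Matrix.mul_apply, Fin.sum_univ_two]
  ext
  · simp only; module
  · simp only; module

theorem tHom_add (M N : Matrix (Fin 2) (Fin 2) ℤ) (x : Torus) :
    tHom (M + N) x = tHom M x + tHom N x := by
  simp only [tHom_apply, Matrix.add_apply]
  ext
  · simp only [Prod.fst_add]; module
  · simp only [Prod.snd_add]; module

theorem tHom_sub (M N : Matrix (Fin 2) (Fin 2) ℤ) (x : Torus) :
    tHom (M - N) x = tHom M x - tHom N x := by
  simp only [tHom_apply, Matrix.sub_apply]
  ext
  · simp only [Prod.fst_sub]; module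
  · simp only [Prod.snd_sub]; module

theorem tHom_smul_one (d : ℤ) (x : Torus) :
    tHom (d • (1 : Matrix (Fin 2) (Fin 2) ℤ)) x = d • x := by
  simp only [tHom_apply, Matrix.smul_apply]
  ext <;> simp

theorem tHom_one (x : Torus) : tHom 1 x = x := by
  simp [tHom_apply]

theorem tHom_ker_finite (M : Matrix (Fin 2) (Fin 2) ℤ) (hM : M.det ≠ 0) :
    {x : Torus | tHom M x = 0}.Finite := by
  have hf : ∀ d : ℤ, d ≠ 0 → {u : AddCircle (1:ℝ) | d • u = 0}.Finite := by
    intro d hd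
    have := AddCircle.finite_torsion (1:ℝ) (n := d.natAbs) (by omega)
    refine this.subset ?_
    intro u hu
    simp only [Set.mem_ofPred_eq] at hu ⊢
    rcases Int.natAbs_eq d with h | h
    · rw [h] at hu; simpa using hu
    · rw [h] at hu; simpa using hu
  refine ((hf _ hM).prod (hf _ hM)).subset ?_
  intro x hx
  have h : tHom (M.adjugate * M) x = 0 := by
    rw [tHom_mul, (hx : tHom M x = 0), map_zero]
  rw [Matrix.adjugate_mul, tHom_smul_one] at h
  exact ⟨congrArg Prod.fst h, congrArg Prod.snd h⟩

theorem tHom_ker_dense (B : Matrix (Fin 2) (Fin 2) ℤ) (hB : B.det ≠ 0) (c : ℝ)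
    (hc : ∀ i j, |(B i j : ℝ)| ≤ c) (x : Torus) :
    ∃ a : Torus, tHom B a = 0 ∧ dist x a ≤ c / |(B.det : ℝ)| := by
  obtain ⟨x1, x2⟩ := x
  obtain ⟨v1, rfl⟩ := QuotientAddGroup.mk_surjective x1
  obtain ⟨v2, rfl⟩ := QuotientAddGroup.mk_surjective x2
  set w1 : ℝ := B 0 0 * v1 + B 0 1 * v2 with hw1
  set w2 : ℝ := B 1 0 * v1 + B 1 1 * v2 with hw2
  have hr1 := abs_sub_round w1
  have hr2 := abs_sub_round w2
  set r1 := w1 - round w1 with hr1d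
  set r2 := w2 - round w2 with hr2d
  have hd : (B.det : ℝ) = B 0 0 * B 1 1 - B 0 1 * B 1 0 := by
    rw [Matrix.det_fin_two]; push_cast; ring
  have hd0 : (B.det : ℝ) ≠ 0 := by exact_mod_cast hB
  set d : ℝ := (B.det : ℝ) with hdd
  set s1 : ℝ := (B 1 1 * r1 - B 0 1 * r2) / d with hs1
  set s2 : ℝ := (- B 1 0 * r1 + B 0 0 * r2) / d with hs2
  have key : ∀ p q : ℝ, |p| ≤ c → |q| ≤ c → |p * r1 + q * r2| ≤ c := by
    intro p q hp hq
    have h1 : |p * r1| ≤ c * (1/2) := by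
      rw [abs_mul]; exact mul_le_mul hp hr1 (abs_nonneg _) ((abs_nonneg _).trans hp)
    have h2 : |q * r2| ≤ c * (1/2) := by
      rw [abs_mul]; exact mul_le_mul hq hr2 (abs_nonneg _) ((abs_nonneg _).trans hp)
    linarith [abs_add_le (p * r1) (q * r2)]
  have hs1b : |s1| ≤ c / |d| := by
    rw [hs1, abs_div]
    gcongr
    have := key (B 1 1) (-B 0 1) (hc _ _) (by rw [abs_neg]; exact hc _ _)
    rwa [neg_mul, ← sub_eq_add_neg] at this
  have hs2b : |s2| ≤ c / |d| := by
    rw [hs2, abs_div]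
    gcongr
    exact key (-B 1 0) (B 0 0) (by rw [abs_neg]; exact hc _ _) (hc _ _)
  have e1 : B 0 0 * (v1 - s1) + B 0 1 * (v2 - s2) = (round w1 : ℝ) := by
    have : B 0 0 * s1 + B 0 1 * s2 = r1 := by
      rw [hs1, hs2]; field_simp; rw [hd]; ring
    linarith
  have e2 : B 1 0 * (v1 - s1) + B 1 1 * (v2 - s2) = (round w2 : ℝ) := by
    have : B 1 0 * s1 + B 1 1 * s2 = r2 := by
      rw [hs1, hs2]; field_simp; rw [hd]; ring
    linarith
  have hz : ∀ m : ℤ, (((m : ℝ)) : AddCircle (1:ℝ)) = 0 := by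
    intro m
    rw [AddCircle.coe_eq_zero_iff]
    exact ⟨m, by simp⟩
  refine ⟨(((v1 - s1 : ℝ) : AddCircle (1:ℝ)), ((v2 - s2 : ℝ) : AddCircle (1:ℝ))), ?_, ?_⟩
  · rw [tHom_apply]
    ext
    · simp only [Prod.fst_zero]
      rw [← hz (round w1), ← e1]
      simp only [← zsmul_eq_mul]
      rfl
    · simp only [Prod.snd_zero]
      rw [← hz (round w2), ← e2]
      simp only [← zsmul_eq_mul]
      rfl
  · have hn : ∀ v s : ℝ, dist (v : AddCircle (1:ℝ)) ((v - s : ℝ) : AddCircle (1:ℝ)) ≤ |s| := by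
      intro v s
      rw [dist_eq_norm, ← AddCircle.coe_sub]
      have : v - (v - s) = s := by ring
      rw [this]
      exact QuotientAddGroup.norm_mk_le_norm
    rw [Prod.dist_eq]
    exact max_le ((hn _ _).trans hs1b) ((hn _ _).trans hs2b)

noncomputable def tMeas : Measure Torus :=
  (AddCircle.haarAddCircle (T := (1:ℝ))).prod (AddCircle.haarAddCircle (T := (1:ℝ)))

instance : Fact ((0:ℝ) < 1) := ⟨one_pos⟩
instance tMeas_prob : IsProbabilityMeasure tMeas := by unfold tMeas; infer_instance
instance tMeas_inv : tMeas.IsAddLeftInvariant := by unfold tMeas; infer_instance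

theorem avg_lemma (F : Finset Torus) (hF : ∀ a ∈ F, ∀ b ∈ F, a - b ∈ F)
    (φ : C(Torus, ℝ)) (ε η : ℝ) (hd : ∀ x, ∃ a ∈ F, dist x a ≤ ε)
    (hφ : ∀ x y, dist x y ≤ ε → |φ x - φ y| ≤ η) :
    |∑ a ∈ F, φ a - F.card * ∫ x, φ x ∂tMeas| ≤ F.card * η := by
  have hint : ∀ a : Torus, Integrable (fun x => φ (a + x)) tMeas := by
    intro a
    exact Continuous.integrable_of_hasCompactSupport (by fun_prop)
      (HasCompactSupport.of_compactSpace _)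
  have h1 : F.card * ∫ x, φ x ∂tMeas = ∫ x, ∑ a ∈ F, φ (a + x) ∂tMeas := by
    rw [integral_finsetSum _ (fun a _ => hint a)]
    simp [integral_add_left_eq_self (fun x => φ x)]
  have h2 : ∑ a ∈ F, φ a = ∫ x, ∑ a ∈ F, φ a ∂tMeas := by simp
  rw [h1, h2, ← integral_sub (integrable_const _) (integrable_finsetSum _ (fun a _ => hint a))]
  have h3 : ∀ x, ‖∑ a ∈ F, φ a - ∑ a ∈ F, φ (a + x)‖ ≤ F.card * η := by
    intro x
    obtain ⟨b, hb, hbd⟩ := hd x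
    have h0 : (0 : Torus) ∈ F := by simpa using hF b hb b hb
    have hnb : -b ∈ F := by simpa using hF 0 h0 b hb
    have h4 : ∑ a ∈ F, φ (a + x) = ∑ a ∈ F, φ (a - b + x) := by
      symm
      refine Finset.sum_bij' (fun a _ => a - b) (fun a _ => a - (-b)) ?_ ?_ ?_ ?_ ?_
      · intro a ha; exact hF a ha b hb
      · intro a ha; exact hF a ha _ hnb
      · intro a ha; simp
      · intro a ha; simp
      · intro a ha; rfl
    rw [h4, ← Finset.sum_sub_distrib]
    refine (norm_sum_le _ _).trans ?_
    rw [← nsmul_eq_mul]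
    refine Finset.sum_le_card_nsmul _ _ _ ?_
    intro a ha
    refine hφ _ _ ?_
    rw [dist_comm]
    have : dist (a - b + x) a = dist x b := by
      rw [dist_eq_norm, dist_eq_norm]; congr 1; abel
    rw [this]; exact hbd
  have := norm_integral_le_of_norm_le_const (μ := tMeas) (Eventually.of_forall h3)
  simpa using this

theorem pow_formula (R : Matrix (Fin 2) (Fin 2) ℝ) (l m : ℝ)
    (hR : R * R = (l + m) • R - (l * m) • (1 : Matrix (Fin 2) (Fin 2) ℝ)) (n : ℕ) :
    (l - m) • R ^ n = l ^ n • (R - m • (1 : Matrix (Fin 2) (Fin 2) ℝ)) -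
      m ^ n • (R - l • (1 : Matrix (Fin 2) (Fin 2) ℝ)) := by
  induction n with
  | zero => simp only [pow_zero]; module
  | succ k ih =>
    rw [pow_succ, ← smul_mul_assoc, ih]
    simp only [sub_mul, smul_mul_assoc, one_mul, hR]
    module

theorem cayley (M : Matrix (Fin 2) (Fin 2) ℝ) (l m : ℝ) (hdet : M.det = l * m)
    (htr : M 0 0 + M 1 1 = l + m) :
    M * M = (l + m) • M - (l * m) • (1 : Matrix (Fin 2) (Fin 2) ℝ) := by
  rw [← hdet, ← htr, Matrix.det_fin_two]
  ext i j
  fin_cases i <;> fin_cases j <;> simp [Matrix.mul_apply, Fin.sum_univ_two] <;> ring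

theorem pow_bound (M : Matrix (Fin 2) (Fin 2) ℤ) (l : ℝ) (hl : 1 < l) (hdet : M.det = 1)
    (htr : (M 0 0 : ℝ) + (M 1 1 : ℝ) = l + l⁻¹) :
    (∃ C : ℝ, 0 ≤ C ∧ ∀ n i j, |(((M ^ n) i j : ℤ) : ℝ)| ≤ C * l ^ n) ∧
    ∀ n, (((M ^ n) 0 0 : ℤ) : ℝ) + (((M ^ n) 1 1 : ℤ) : ℝ) = l ^ n + l⁻¹ ^ n := by
  have l0 : 0 < l := by linarith
  have hm0 : 0 < l⁻¹ := by positivity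
  have hm1 : l⁻¹ < 1 := inv_lt_one_of_one_lt₀ hl
  have hlm : l * l⁻¹ = 1 := mul_inv_cancel₀ l0.ne'
  set m := l⁻¹ with hm
  set R : Matrix (Fin 2) (Fin 2) ℝ := (Int.castRingHom ℝ).mapMatrix M with hR
  have hRe : ∀ i j, R i j = (M i j : ℝ) := fun i j => rfl
  have hRn : ∀ n i j, (((M ^ n) i j : ℤ) : ℝ) = (R ^ n) i j := by
    intro n i j
    rw [hR, ← map_pow]; rfl
  have hRd : R.det = l * m := by
    rw [hlm, hR, ← RingHom.map_det, hdet]; simp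
  have hf := pow_formula R l m (cayley R l m hRd (by rw [hRe, hRe]; exact htr))
  have hfe : ∀ n i j, (l - m) * (R ^ n) i j =
      l ^ n * (R i j - m * (1 : Matrix (Fin 2) (Fin 2) ℝ) i j) -
      m ^ n * (R i j - l * (1 : Matrix (Fin 2) (Fin 2) ℝ) i j) := by
    intro n i j
    have := congrFun (congrFun (hf n) i) j
    simpa using this
  have hpos : 0 < l - m := by linarith
  constructor
  · set K : ℝ := ∑ i, ∑ j, |R i j| with hK
    have hKb : ∀ i j, |R i j| ≤ K := by
      intro i j
      have h1 : |R i j| ≤ ∑ j, |R i j| :=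
        Finset.single_le_sum (f := fun j => |R i j|) (fun _ _ => abs_nonneg _) (Finset.mem_univ j)
      have h2 : ∑ j, |R i j| ≤ K :=
        Finset.single_le_sum (f := fun i => ∑ j, |R i j|)
          (fun _ _ => Finset.sum_nonneg fun _ _ => abs_nonneg _) (Finset.mem_univ i)
      exact h1.trans h2
    have hK0 : 0 ≤ K := (abs_nonneg _).trans (hKb 0 0)
    have hb : ∀ t : ℝ, 0 < t → ∀ i j,
        |R i j - t * (1 : Matrix (Fin 2) (Fin 2) ℝ) i j| ≤ K + t := by
      intro t ht i j
      have h1 : |t * (1 : Matrix (Fin 2) (Fin 2) ℝ) i j| ≤ t := by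
        rw [Matrix.one_apply]
        split_ifs
        · simp [abs_of_pos ht]
        · simpa using ht.le
      have := abs_sub (R i j) (t * (1 : Matrix (Fin 2) (Fin 2) ℝ) i j)
      linarith [hKb i j]
    refine ⟨(2 * K + l + m) / (l - m), by positivity, ?_⟩
    intro n i j
    rw [hRn, div_mul_eq_mul_div, le_div_iff₀ hpos]
    have e : |(R ^ n) i j| * (l - m) = |(l - m) * (R ^ n) i j| := by
      rw [abs_mul, abs_of_pos hpos, mul_comm]
    rw [e, hfe]
    refine (abs_sub _ _).trans ?_
    rw [abs_mul, abs_mul, abs_of_pos (pow_pos l0 n), abs_of_pos (pow_pos hm0 n)]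
    have h1 := mul_le_mul_of_nonneg_left (hb m hm0 i j) (pow_pos l0 n).le
    have h2 := mul_le_mul_of_nonneg_left (hb l l0 i j) (pow_pos hm0 n).le
    have h3 : m ^ n ≤ l ^ n := pow_le_pow_left₀ hm0.le (by linarith) n
    have h4 := mul_le_mul_of_nonneg_right h3 (by positivity : 0 ≤ K + l)
    linarith
  · intro n
    rw [hRn, hRn]
    have h0 := hfe n 0 0
    have h1 := hfe n 1 1
    simp only [Matrix.one_apply_eq, hRe] at h0 h1
    apply mul_left_cancel₀ hpos.ne'
    linear_combination h0 + h1 + (l ^ n - m ^ n) * htr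

theorem good_density (A : Matrix (Fin 2) (Fin 2) ℤ) (l : ℝ) (hl : 1 < l) (hdet : A.det = 1)
    (htr : (A 0 0 : ℝ) + (A 1 1 : ℝ) = l + l⁻¹) (ε : ℝ) (hε : 0 < ε) :
    ∀ᶠ n : ℕ in atTop, ∀ s : ℤ, (s = 1 ∨ s = -1) →
      (A ^ n - s • (1 : Matrix (Fin 2) (Fin 2) ℤ)).det ≠ 0 ∧
      ∀ x : Torus, ∃ a, tHom (A ^ n - s • (1 : Matrix (Fin 2) (Fin 2) ℤ)) a = 0 ∧
        dist x a ≤ ε := by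
  have l0 : 0 < l := by linarith
  obtain ⟨⟨C, hC0, hC⟩, hT⟩ := pow_bound A l hl hdet htr
  have hadj : A.adjugate.det = 1 := by rw [Matrix.det_adjugate, hdet, one_pow]
  obtain ⟨⟨C', hC0', hC'⟩, -⟩ := pow_bound A.adjugate l hl hadj (by
    rw [Matrix.adjugate_fin_two]; simp; linarith)
  have hAA : A * A.adjugate = 1 := by rw [Matrix.mul_adjugate, hdet, one_smul]
  have hcomm : Commute A A.adjugate := by
    rw [Commute, SemiconjBy, Matrix.mul_adjugate, Matrix.adjugate_mul]
  have hAAn : ∀ k, A ^ k * A.adjugate ^ k = 1 := by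
    intro k; rw [← hcomm.mul_pow, hAA, one_pow]
  have hlim : Tendsto (fun n : ℕ => l ^ n) atTop atTop := tendsto_pow_atTop_atTop_of_one_lt hl
  have hlim2 : Tendsto (fun n : ℕ => l ^ (n / 2)) atTop atTop :=
    hlim.comp (Nat.tendsto_div_const_atTop (by norm_num))
  filter_upwards [hlim.eventually_ge_atTop 4, hlim2.eventually_ge_atTop ((C + C') * 2 / ε)]
    with n hn4 hn2 s hs
  set I : Matrix (Fin 2) (Fin 2) ℤ := 1 with hI
  set h := n / 2 with hh
  set k := n - n / 2 with hk
  have hkh : h + k = n := by omega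
  set B := A ^ k - s • A.adjugate ^ h with hB
  have hD : A ^ n - s • I = A ^ h * B := by
    rw [hB, mul_sub, ← pow_add, hkh, mul_smul_comm, hAAn]
  have hdB : (A ^ n - s • I).det = B.det := by
    rw [hD, Matrix.det_mul, Matrix.det_pow, hdet]; simp
  have hdD : (A ^ n - s • I).det = 2 - s * ((A ^ n) 0 0 + (A ^ n) 1 1) := by
    have h1 : (A ^ n).det = 1 := by rw [Matrix.det_pow, hdet, one_pow]
    rw [Matrix.det_fin_two] at h1 ⊢
    have hs2 : s * s = 1 := by rcases hs with rfl | rfl <;> rfl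
    simp only [hI, Matrix.sub_apply, Matrix.smul_apply, Matrix.one_apply_eq, smul_eq_mul,
      Matrix.one_apply_ne (show (0 : Fin 2) ≠ 1 by decide),
      Matrix.one_apply_ne (show (1 : Fin 2) ≠ 0 by decide)]
    linear_combination h1 + hs2
  have hdr : l ^ n / 2 ≤ |(B.det : ℝ)| := by
    rw [← hdB, hdD]
    push_cast
    rw [hT n]
    have : 0 < l⁻¹ ^ n := by positivity
    rcases hs with rfl | rfl
    · rw [abs_sub_comm]
      refine le_trans ?_ (le_abs_self _)
      push_cast; linarith
    · refine le_trans ?_ (le_abs_self _)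
      push_cast; linarith
  have hBpos : 0 < |(B.det : ℝ)| := by linarith
  have hB0 : B.det ≠ 0 := by
    intro h0; rw [h0] at hBpos; simp at hBpos
  refine ⟨by rw [hdB]; exact hB0, ?_⟩
  intro x
  obtain ⟨a, ha, hax⟩ := tHom_ker_dense B hB0 ((C + C') * l ^ k) (by
    intro i j
    have h1 := hC k i j
    have h2 := hC' h i j
    have h3 : l ^ h ≤ l ^ k := pow_le_pow_right₀ hl.le (by omega)
    have h4 := mul_le_mul_of_nonneg_left h3 hC0'
    have h5 : ((B i j : ℤ) : ℝ) = (((A ^ k) i j : ℤ) : ℝ) - s * (((A.adjugate ^ h) i j : ℤ) : ℝ) := by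
      rw [hB, Matrix.sub_apply, Matrix.smul_apply, smul_eq_mul]; push_cast; rfl
    have h6 : |(s : ℝ)| = 1 := by rcases hs with rfl | rfl <;> simp
    rw [h5]
    refine (abs_sub _ _).trans ?_
    rw [abs_mul, h6]
    linarith) x
  refine ⟨a, ?_, hax.trans ?_⟩
  · rw [hD, tHom_mul, ha, map_zero]
  · rw [div_le_iff₀ hBpos]
    rw [div_le_iff₀ hε] at hn2
    have e : l ^ n = l ^ h * l ^ k := by rw [← pow_add, hkh]
    have h1 := mul_le_mul_of_nonneg_right hn2 (pow_pos l0 k).le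
    have h2 := mul_le_mul_of_nonneg_left hdr hε.le
    rw [e] at h2
    linarith

theorem comb_lemma {S : Type*} (T : Torus → Torus) (hT : ∀ x, T (-x) = -T x)
    (π : Torus → S) (hsurj : Function.Surjective π)
    (hπ : ∀ x y : Torus, π x = π y ↔ (x = y ∨ x = -y))
    (K L : Finset Torus) (hK : ∀ x, x ∈ K ↔ T x = x) (hL : ∀ x, x ∈ L ↔ T x = -x)
    (P : Finset S) (hP : ∀ x, π x ∈ P ↔ (T x = x ∨ T x = -x)) (g : S → ℝ) :
    ∑ x ∈ K, g (π x) + ∑ x ∈ L, g (π x) = 2 * ∑ y ∈ P, g y := by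
  classical
  rw [← Finset.sum_fiberwise_of_maps_to (s := K) (t := P) (g := π)
      (fun x hx => (hP x).2 (Or.inl ((hK x).1 hx))),
    ← Finset.sum_fiberwise_of_maps_to (s := L) (t := P) (g := π)
      (fun x hx => (hP x).2 (Or.inr ((hL x).1 hx))), ← Finset.sum_add_distrib, Finset.mul_sum]
  refine Finset.sum_congr rfl ?_
  intro y hy
  obtain ⟨x, rfl⟩ := hsurj y
  have hc : ∀ M : Finset Torus, ∑ z ∈ M with π z = π x, g (π z) =
      (M.filter (fun z => π z = π x)).card * g (π x) := by
    intro M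
    rw [← nsmul_eq_mul, ← Finset.sum_const]
    refine Finset.sum_congr rfl ?_
    intro z hz
    rw [(Finset.mem_filter.1 hz).2]
  rw [hc, hc, ← add_mul]
  congr 1
  norm_cast
  have hx := (hP x).1 hy
  by_cases hxx : x = -x
  · have h1 : K.filter (fun z => π z = π x) = {x} := by
      ext z
      simp only [Finset.mem_filter, Finset.mem_singleton, hK, hπ]
      grind
    have h2 : L.filter (fun z => π z = π x) = {x} := by
      ext z
      simp only [Finset.mem_filter, Finset.mem_singleton, hL, hπ]
      grind
    rw [h1, h2]; simp
  · have hne : ∀ z : Torus, (z = x ∨ z = -x) → (T z = z ↔ T x = x) := by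
      rintro z (rfl | rfl)
      · rfl
      · rw [hT, neg_inj]
    have hne' : ∀ z : Torus, (z = x ∨ z = -x) → (T z = -z ↔ T x = -x) := by
      rintro z (rfl | rfl)
      · rfl
      · rw [hT, neg_inj]
    rcases hx with hx | hx
    · have h1 : K.filter (fun z => π z = π x) = {x, -x} := by
        ext z
        simp only [Finset.mem_filter, Finset.mem_singleton, Finset.mem_insert, hK, hπ]
        grind
      have h2 : L.filter (fun z => π z = π x) = ∅ := by
        ext z
        simp only [Finset.mem_filter, hL, hπ, Finset.notMem_empty]
        grind
      rw [h1, h2, Finset.card_pair hxx]; simp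
    · have h1 : L.filter (fun z => π z = π x) = {x, -x} := by
        ext z
        simp only [Finset.mem_filter, Finset.mem_singleton, Finset.mem_insert, hL, hπ]
        grind
      have h2 : K.filter (fun z => π z = π x) = ∅ := by
        ext z
        simp only [Finset.mem_filter, hK, hπ, Finset.notMem_empty]
        grind
      rw [h1, h2, Finset.card_pair hxx]; simp

/-- the averages of Dirac measures on the `n`-periodic points of
`g_A` converge in the weak* topology to a Borel probability measure `μ`. -/
theorem periodic_measures_converge
    (A : Matrix.SpecialLinearGroup (Fin 2) ℤ)
    (lam : ℝ) (hlam : 1 < lam)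
    (htr : ((A.1 0 0 : ℤ) : ℝ) + ((A.1 1 1 : ℤ) : ℝ) = lam + lam⁻¹)
    (fA : Torus ≃ₜ Torus)
    (hfA : ∀ v : ℝ × ℝ, fA (torusMk v) = torusMk (matAct A v))
    (S2 : Type) [MetricSpace S2] [CompactSpace S2]
    [MeasurableSpace S2] [BorelSpace S2]
    (π : Torus → S2) (hπcont : Continuous π) (hπsurj : Function.Surjective π)
    (hπ : ∀ x y : Torus, π x = π y ↔ (x = y ∨ x = -y))
    (gA : S2 ≃ₜ S2) (hgA : ∀ x : Torus, gA (π x) = π (fA x))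
    -- the n-th averaged Dirac measure on periodic points of period n
    (μseq : ℕ → Measure S2)
    (hμseq : ∀ n : ℕ, μseq n =
      (Nat.card {y : S2 | gA^[n] y = y} : ENNReal)⁻¹ •
        Measure.sum (fun p : {y : S2 | gA^[n] y = y} => Measure.dirac (p : S2))) :
    ∃ μ : Measure S2, IsProbabilityMeasure μ ∧
      ∀ g : C(S2, ℝ),
        Tendsto (fun n : ℕ => ∫ x, g x ∂(μseq n)) atTop (nhds (∫ x, g x ∂μ)) := by
  classical
  refine ⟨tMeas.map π, Measure.isProbabilityMeasure_map hπcont.aemeasurable, ?_⟩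
  intro g
  rw [integral_map hπcont.aemeasurable g.continuous.aestronglyMeasurable]
  set φ : C(Torus, ℝ) := g.comp ⟨π, hπcont⟩ with hφ
  change Tendsto _ atTop (nhds (∫ x, φ x ∂tMeas))
  set J := ∫ x, φ x ∂tMeas with hJ
  have hf1 : ∀ x, fA x = tHom A.1 x := by
    rintro ⟨x1, x2⟩
    obtain ⟨v1, rfl⟩ := QuotientAddGroup.mk_surjective x1
    obtain ⟨v2, rfl⟩ := QuotientAddGroup.mk_surjective x2
    have := hfA (v1, v2)
    simp only [torusMk, matAct, ← zsmul_eq_mul] at this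
    exact this
  have hfn : ∀ n x, gA^[n] (π x) = π (tHom (A.1 ^ n) x) := by
    intro n
    induction n with
    | zero => intro x; simp [tHom_one]
    | succ k ih =>
      intro x
      rw [Function.iterate_succ_apply, hgA, hf1, ih, pow_succ, tHom_mul]
  rw [Metric.tendsto_nhds]
  intro e he
  have huc : UniformContinuous φ := CompactSpace.uniformContinuous_of_continuous φ.continuous
  obtain ⟨δ, hδ, hδφ⟩ := Metric.uniformContinuous_iff.1 huc (e / 2) (by positivity)
  filter_upwards [good_density A.1 lam hlam A.2 htr (δ / 2) (by positivity)] with n hn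
  obtain ⟨hd1, hx1⟩ := hn 1 (Or.inl rfl)
  obtain ⟨hd2, hx2⟩ := hn (-1) (Or.inr rfl)
  have hmod : ∀ x y, dist x y ≤ δ / 2 → |φ x - φ y| ≤ e / 2 := by
    intro x y hxy
    have := hδφ (a := x) (b := y) (by linarith)
    rw [Real.dist_eq] at this
    exact this.le
  set K := (tHom_ker_finite _ hd1).toFinset with hKd
  set L := (tHom_ker_finite _ hd2).toFinset with hLd
  have hK0 : ∀ x, x ∈ K ↔ tHom (A.1 ^ n - (1 : ℤ) • (1 : Matrix (Fin 2) (Fin 2) ℤ)) x = 0 := by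
    intro x; rw [hKd, Set.Finite.mem_toFinset]; rfl
  have hL0 : ∀ x, x ∈ L ↔ tHom (A.1 ^ n - (-1 : ℤ) • (1 : Matrix (Fin 2) (Fin 2) ℤ)) x = 0 := by
    intro x; rw [hLd, Set.Finite.mem_toFinset]; rfl
  have hK : ∀ x, x ∈ K ↔ tHom (A.1 ^ n) x = x := by
    intro x; rw [hK0, tHom_sub, tHom_smul_one, one_smul, sub_eq_zero]
  have hL : ∀ x, x ∈ L ↔ tHom (A.1 ^ n) x = -x := by
    intro x; rw [hL0, tHom_sub, tHom_smul_one, neg_smul, one_smul, sub_eq_zero]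
  have hiff : ∀ x, gA^[n] (π x) = π x ↔ (tHom (A.1 ^ n) x = x ∨ tHom (A.1 ^ n) x = -x) := by
    intro x; rw [hfn, hπ]
  have hPfin : {y : S2 | gA^[n] y = y}.Finite := by
    refine (((K ∪ L).image π).finite_toSet).subset ?_
    intro y hy
    obtain ⟨x, rfl⟩ := hπsurj y
    simp only [Finset.coe_image]
    refine ⟨x, ?_, rfl⟩
    rw [Finset.mem_coe, Finset.mem_union, hK, hL]
    exact (hiff x).1 hy
  set P := hPfin.toFinset with hPd
  have hP : ∀ x, π x ∈ P ↔ (tHom (A.1 ^ n) x = x ∨ tHom (A.1 ^ n) x = -x) := by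
    intro x; rw [hPd, Set.Finite.mem_toFinset, ← hiff]; rfl
  have hc := comb_lemma (tHom (A.1 ^ n)) (map_neg _) π hπsurj hπ K L hK hL P hP
  have hcg := hc g
  have hc1 := hc (fun _ => 1)
  simp only [Finset.sum_const, nsmul_eq_mul, mul_one] at hc1
  have b1 := avg_lemma K (by
    intro a ha b hb
    rw [hK0] at ha hb ⊢
    rw [map_sub, ha, hb, sub_zero]) φ (δ / 2) (e / 2)
    (fun x => by obtain ⟨a, ha, h⟩ := hx1 x; exact ⟨a, (hK0 a).2 ha, h⟩) hmod
  have b2 := avg_lemma L (by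
    intro a ha b hb
    rw [hL0] at ha hb ⊢
    rw [map_sub, ha, hb, sub_zero]) φ (δ / 2) (e / 2)
    (fun x => by obtain ⟨a, ha, h⟩ := hx2 x; exact ⟨a, (hL0 a).2 ha, h⟩) hmod
  rw [← hJ] at b1 b2
  have hKpos : (0:ℝ) < K.card := by
    have : 0 < K.card := Finset.card_pos.2 ⟨0, (hK 0).2 (map_zero _)⟩
    exact_mod_cast this
  have hPpos : (0:ℝ) < P.card := by
    have : (0:ℝ) ≤ L.card := by positivity
    linarith
  have hint : ∫ x, g x ∂(μseq n) = (P.card : ℝ)⁻¹ * ∑ y ∈ P, g y := by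
    have : Fintype {y : S2 | gA^[n] y = y} := hPfin.fintype
    rw [hμseq, integral_smul_measure, Measure.sum_fintype, integral_finsetSum_measure]
    · simp only [integral_dirac]
      have hcard : Nat.card {y : S2 | gA^[n] y = y} = P.card :=
        Nat.card_eq_card_finite_toFinset hPfin
      rw [hcard, ENNReal.toReal_inv, ENNReal.toReal_natCast, smul_eq_mul]
      congr 1
      refine (Finset.sum_subtype P ?_ g).symm
      intro x; rw [hPd, Set.Finite.mem_toFinset]
    · intro i _
      exact Continuous.integrable_of_hasCompactSupport g.continuous
        (HasCompactSupport.of_compactSpace _)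
  rw [hint, Real.dist_eq]
  have hsum : |∑ y ∈ P, g y - P.card * J| ≤ P.card * (e / 2) := by
    change ∑ a ∈ K, φ a + ∑ a ∈ L, φ a = _ at hcg
    rw [abs_le] at b1 b2 ⊢
    have c1 : (K.card : ℝ) * J + L.card * J = 2 * (P.card * J) := by
      linear_combination J * hc1
    have c2 : (K.card : ℝ) * (e / 2) + L.card * (e / 2) = 2 * (P.card * (e / 2)) := by
      linear_combination (e / 2) * hc1
    obtain ⟨b11, b12⟩ := b1
    obtain ⟨b21, b22⟩ := b2
    constructor <;> linarith
  have : (P.card : ℝ)⁻¹ * ∑ y ∈ P, g y - J = (P.card : ℝ)⁻¹ * (∑ y ∈ P, g y - P.card * J) := by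
    field_simp
  rw [this, abs_mul, abs_of_pos (inv_pos.2 hPpos)]
  calc (P.card : ℝ)⁻¹ * |∑ y ∈ P, g y - P.card * J|
      ≤ (P.card : ℝ)⁻¹ * (P.card * (e / 2)) := by gcongr
    _ = e / 2 := by field_simp
    _ < e := by linarith
end

section
/- Let f : X → X be a topologically mixing homeomorphism of a compact metric space. Then for every α > 0 there exists M ∈ ℕ such that for all x, y ∈ X and every n ≥ M there exists an α-pseudo-orbit of length n from x to y; that is, there are points x = η_0, η_1, …, η_n = y with d(f(η_i), η_{i+1}) < α for every 0 ≤ i < n. -/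
/-- `f` is topologically mixing. -/
def TopologicallyMixing {X : Type*} [TopologicalSpace X] (f : X ≃ₜ X) : Prop :=
  ∀ U V : Set X, IsOpen U → IsOpen V → U.Nonempty → V.Nonempty →
    ∃ n : ℕ, ∀ k : ℕ, n ≤ k → (f^[k] '' U ∩ V).Nonempty

/-- a topologically mixing homeomorphism of a compact metric space
connects any two points by `α`-pseudo-orbits of any sufficiently large length. -/
theorem mixing_implies_pseudo_orbit_connection
    {X : Type*} [MetricSpace X] [CompactSpace X] (f : X ≃ₜ X)
    (hmix : TopologicallyMixing f) :
    ∀ α : ℝ, 0 < α → ∃ M : ℕ, ∀ x y : X, ∀ n : ℕ, M ≤ n →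
      ∃ η : ℕ → X, η 0 = x ∧ η n = y ∧
        ∀ i < n, dist (f (η i)) (η (i+1)) < α := by
  intro α hα
  have hα2 : 0 < α / 2 := by linarith
  obtain ⟨t, -, htf, ht⟩ := finite_cover_balls_of_compact (isCompact_univ (X := X)) hα2
  have hN : ∀ a b : X, ∃ n : ℕ, ∀ k : ℕ, n ≤ k →
      (f^[k] '' Metric.ball a (α / 2) ∩ Metric.ball b (α / 2)).Nonempty := fun a b =>
    hmix _ _ Metric.isOpen_ball Metric.isOpen_ball ⟨a, Metric.mem_ball_self hα2⟩
      ⟨b, Metric.mem_ball_self hα2⟩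
  choose N hN using hN
  obtain ⟨M, hM⟩ := ((htf.prod htf).image (fun p : X × X => N p.1 p.2)).bddAbove
  refine ⟨M + 2, fun x y n hn => ?_⟩
  have hcov : ∀ p : X, ∃ a ∈ t, dist p a < α / 2 := by
    intro p
    have := ht (Set.mem_univ p)
    simpa using this
  obtain ⟨a, ha, hxa⟩ := hcov (f x)
  obtain ⟨b, hb, hyb⟩ := hcov y
  have hab : N a b ≤ M := hM ⟨(a, b), ⟨ha, hb⟩, rfl⟩
  obtain ⟨m, rfl⟩ : ∃ m, n = m + 2 := ⟨n - 2, by omega⟩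
  obtain ⟨w, ⟨z, hz, rfl⟩, hw⟩ := hN a b (m + 1) (by omega)
  rw [Metric.mem_ball] at hz hw
  refine ⟨fun i => if i = 0 then x else if i = m + 2 then y else f^[i - 1] z, by simp, by simp, ?_⟩
  intro i hi
  rcases Nat.eq_zero_or_pos i with rfl | hi0
  · simp only [if_true, zero_add, one_ne_zero, if_false, Nat.sub_self, Function.iterate_zero, id]
    rw [if_neg (by omega)]
    have := dist_triangle_right (f x) z a
    linarith
  · obtain ⟨j, rfl⟩ : ∃ j, i = j + 1 := ⟨i - 1, by omega⟩
    simp only [Nat.add_sub_cancel]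
    rw [if_neg (by omega), if_neg (by omega), if_neg (by omega), ← Function.iterate_succ_apply' f]
    split_ifs with h
    · obtain rfl : j = m := by omega
      have := dist_triangle_right (f^[j + 1] z) y b
      linarith
    · simpa using hα
end
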